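/- arXiv:1706.03726 — 4 statements merged into one kernel-verified Lean document; each statement's English description precedes it below -/
import Mathlib

section
/- Let k be a number field, let m be a positive integer not divisible by 8, and let x ∈ k. If for all but finitely many finite places v of k the image of x in the completion k_v is an m-th power in k_v, then x is an m-th power in k. (This is the non-exceptional case of the Grunwald–Wang theorem: the exceptional case can only occur when m = 2^t·m' with m' odd and t > s_k ≥ 2, hence requires 8 ∣ m.) -/
open IsDedekindDomain

/-!
Suppose first that `k` contains the `m`-th roots of unity and that the integral element `x` is an
`m`-th power modulo almost every prime, and let `L = k(x^{1/m})`. At almost every prime the `m`-th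
roots of `x` stay distinct modulo a prime `Q` of `L` and are congruent to elements of `k`, so an
automorphism fixing `Q` is trivial and `P = Q ∩ k` splits completely. If `L ≠ k`, almost every `P`
then has two distinct primes `q₁ P`, `q₂ P` of norm `N P` above it, and `(I, J) ↦ q₁ I * q₂ J`
embeds pairs of ideals of `k` prime to the exceptional `P` into ideals of `L`, multiplying norms.
This is impossible: `L` has `O(s)` ideals of norm at most `s`, whereas the number of such pairs
with `N I * N J ≤ s` outgrows every multiple of `s`, since `∑ 1 / N I` diverges.

In general `x` is thus an `m`-th power `y ^ m` in `k(ζ_m)`, and one may take `m` to be a prime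
power, either odd or at most `4`. For odd `m` the Galois group is cyclic and `y` can be multiplied
by a root of unity to become invariant, which is the vanishing of `H¹(Gal(k(ζ_m)/k), μ_m)`. For
`m = 4`, first `x = u ^ 2` in `k` and then `w ^ 2 = u` in `k(i)`, and either `w` or `i * w` is
invariant.
-/

open scoped NumberField

section LinearGrowth

open Filter Topology

/-- The elements of `A`, ordered by the size function `N`, have linear counting function:
`#{a ∈ A | N a ≤ s} ~ c s` as `s → ∞`. -/
structure HasLinearGrowth {α : Type*} (N : α → ℝ) (A : Set α) (c : ℝ) : Prop where
  finite_le (s : ℝ) : {a ∈ A | N a ≤ s}.Finite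
  tendsto_ncard_div : Tendsto (fun s : ℝ ↦ ({a ∈ A | N a ≤ s}.ncard : ℝ) / s) atTop (𝓝 c)

namespace HasLinearGrowth

variable {α β : Type*} {N : α → ℝ} {M : β → ℝ} {A A' : Set α} {B : Set β} {c c' d : ℝ}

theorem of_finite (hA : A.Finite) : HasLinearGrowth N A 0 where
  finite_le s := hA.subset (Set.sep_subset _ _)
  tendsto_ncard_div := by
    refine squeeze_zero' ?_ ?_ (tendsto_const_nhds (x := (A.ncard : ℝ)).div_atTop tendsto_id)
    · filter_upwards [eventually_ge_atTop 0] with s hs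
      positivity
    · filter_upwards [eventually_ge_atTop 0] with s hs
      exact div_le_div_of_nonneg_right
        (Nat.cast_le.mpr (Set.ncard_le_ncard (Set.sep_subset _ _) hA)) hs

theorem le_of_subset (h : HasLinearGrowth N A c) (h' : HasLinearGrowth N A' c') (hAA' : A ⊆ A') :
    c ≤ c' := by
  refine le_of_tendsto_of_tendsto h.tendsto_ncard_div h'.tendsto_ncard_div ?_
  filter_upwards [eventually_ge_atTop 0] with s hs
  have hsub : {a ∈ A | N a ≤ s} ⊆ {a ∈ A' | N a ≤ s} := fun a ha ↦ ⟨hAA' ha.1, ha.2⟩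
  exact div_le_div_of_nonneg_right (Nat.cast_le.mpr (Set.ncard_le_ncard hsub (h'.finite_le s))) hs

theorem union (h : HasLinearGrowth N A c) (h' : HasLinearGrowth N A' c') (hAA' : Disjoint A A') :
    HasLinearGrowth N (A ∪ A') (c + c') := by
  have hsep (s : ℝ) : {a ∈ A ∪ A' | N a ≤ s} = {a ∈ A | N a ≤ s} ∪ {a ∈ A' | N a ≤ s} :=
    Set.union_inter_distrib_right _ _ _
  refine ⟨fun s ↦ hsep s ▸ (h.finite_le s).union (h'.finite_le s),
    (h.tendsto_ncard_div.add h'.tendsto_ncard_div).congr fun s ↦ ?_⟩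
  rw [hsep, Set.ncard_union_eq (hAA'.mono (Set.sep_subset _ _) (Set.sep_subset _ _))
    (h.finite_le s) (h'.finite_le s), Nat.cast_add, add_div]

theorem biUnion {ι : Type*} {F : ι → Set α} {r : ι → ℝ} (T : Finset ι)
    (h : ∀ i, HasLinearGrowth N (F i) (r i)) (hF : Pairwise (Function.onFun Disjoint F)) :
    HasLinearGrowth N (⋃ i ∈ T, F i) (∑ i ∈ T, r i) := by
  classical
  induction T using Finset.induction_on with
  | empty => simpa using of_finite Set.finite_empty
  | insert i T hi ih =>
    rw [Finset.set_biUnion_insert, Finset.sum_insert hi]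
    refine (h i).union ih (Set.disjoint_iUnion₂_right.mpr fun j hj ↦ hF ?_)
    exact (ne_of_mem_of_not_mem hj hi).symm

theorem sdiff (h : HasLinearGrowth N A c) (h' : HasLinearGrowth N A' c') (hAA' : A' ⊆ A) :
    HasLinearGrowth N (A \ A') (c - c') := by
  refine ⟨fun s ↦ (h.finite_le s).subset fun a ha ↦ ⟨ha.1.1, ha.2⟩,
    (h.tendsto_ncard_div.sub h'.tendsto_ncard_div).congr fun s ↦ ?_⟩
  have hsep : {a ∈ A \ A' | N a ≤ s} = {a ∈ A | N a ≤ s} \ {a ∈ A' | N a ≤ s} := by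
    ext a
    simp only [Set.mem_sdiff, Set.mem_ofPred_eq]
    tauto
  have hsub : {a ∈ A' | N a ≤ s} ⊆ {a ∈ A | N a ≤ s} := fun a ha ↦ ⟨hAA' ha.1, ha.2⟩
  rw [hsep, Set.cast_ncard_sdiff hsub (h.finite_le s), sub_div]

theorem image (h : HasLinearGrowth N A c) {g : α → β} (hg : Set.InjOn g A) {n : ℝ} (hn : 0 < n)
    (hM : ∀ a ∈ A, M (g a) = n * N a) : HasLinearGrowth M (g '' A) (c / n) := by
  have hsep (s : ℝ) : {b ∈ g '' A | M b ≤ s} = g '' {a ∈ A | N a ≤ s / n} := by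
    ext b
    constructor
    · rintro ⟨⟨a, ha, rfl⟩, hb⟩
      rw [hM a ha, ← le_div_iff₀' hn] at hb
      exact ⟨a, ⟨ha, hb⟩, rfl⟩
    · rintro ⟨a, ⟨ha, has⟩, rfl⟩
      exact ⟨⟨a, ha, rfl⟩, by rwa [hM a ha, ← le_div_iff₀' hn]⟩
  refine ⟨fun s ↦ hsep s ▸ (h.finite_le _).image g, ?_⟩
  have hscaled := (h.tendsto_ncard_div.comp (tendsto_id.atTop_div_const hn)).div_const n
  refine hscaled.congr fun s ↦ ?_
  rw [hsep, (hg.mono (Set.sep_subset _ _)).ncard_image, Function.comp_apply, id,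
    div_div, div_mul_cancel₀ _ hn.ne']

theorem le_of_forall_sum_inv_le (h : HasLinearGrowth N A c) (hN : ∀ a ∈ A, 0 < N a) {ε : ℝ}
    (hε : ∀ T : Finset α, ↑T ⊆ A → ∑ a ∈ T, (N a)⁻¹ ≤ ε) : c ≤ ε := by
  refine le_of_tendsto h.tendsto_ncard_div (Eventually.of_forall fun s ↦ ?_)
  set T := (h.finite_le s).toFinset with hT
  have hTs : ∀ a ∈ T, a ∈ A ∧ N a ≤ s := fun a ha ↦ (h.finite_le s).mem_toFinset.mp ha
  rw [Set.ncard_eq_toFinset_card _ (h.finite_le s), ← hT, div_eq_mul_inv, ← nsmul_eq_mul]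
  refine (T.card_nsmul_le_sum _ _ fun a ha ↦ ?_).trans (hε T fun a ha ↦ (hTs a ha).1)
  exact inv_anti₀ (hN a (hTs a ha).1) (hTs a ha).2

theorem not_summable_inv (h : HasLinearGrowth N A c) (hc : 0 < c) (hN : ∀ a ∈ A, 0 < N a) :
    ¬ Summable fun a : A ↦ (N a)⁻¹ := by
  intro hsum
  have hind : Summable (A.indicator fun a ↦ (N a)⁻¹) := summable_subtype_iff_indicator.mp hsum
  obtain ⟨T, hT⟩ := summable_iff_vanishing.mp hind _ (Metric.ball_mem_nhds 0 (half_pos hc))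
  have htail := h.sdiff (of_finite (T.finite_toSet.inter_of_right A)) Set.inter_subset_left
  rw [sub_zero, Set.sdiff_self_inter] at htail
  refine (half_lt_self hc).not_ge
    (htail.le_of_forall_sum_inv_le (fun a ha ↦ hN a ha.1) fun T' hT' ↦ ?_)
  have hball := hT T' (Finset.disjoint_left.mpr fun a ha ↦ (hT' ha).2)
  rw [mem_ball_zero_iff, Real.norm_eq_abs,
    Finset.sum_congr rfl fun a ha ↦ Set.indicator_of_mem (hT' ha).1 _] at hball
  exact (le_abs_self _).trans hball.le

-- The sets `f (a, A)` are disjoint subsets of `B` of growth `c / N a`, and `∑ (N a)⁻¹` diverges.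
theorem not_injOn_prod (hA : HasLinearGrowth N A c) (hc : 0 < c) (hN : ∀ a ∈ A, 0 < N a)
    (hB : HasLinearGrowth M B d) {f : α × α → β} (hfB : Set.MapsTo f (A ×ˢ A) B)
    (hfM : ∀ a ∈ A, ∀ b ∈ A, M (f (a, b)) = N a * N b) : ¬ Set.InjOn f (A ×ˢ A) := by
  intro hf
  refine hA.not_summable_inv hc hN (summable_of_sum_le (c := d / c)
    (fun a ↦ inv_nonneg.mpr (hN a a.2).le) fun T ↦ ?_)
  let row (a : A) : Set β := (fun b ↦ f (a, b)) '' A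
  have hrow (a : A) : HasLinearGrowth M (row a) (c / N a) :=
    hA.image (fun b hb b' hb' h ↦ congrArg Prod.snd (hf ⟨a.2, hb⟩ ⟨a.2, hb'⟩ h)) (hN a a.2)
      (hfM a a.2)
  have hdisj : Pairwise (Function.onFun Disjoint row) := by
    refine fun a a' hne ↦ Set.disjoint_left.mpr ?_
    rintro _ ⟨b, hb, rfl⟩ ⟨b', hb', h⟩
    exact hne (Subtype.ext (congrArg Prod.fst (hf ⟨a'.2, hb'⟩ ⟨a.2, hb⟩ h)).symm)
  have hle : ∑ a ∈ T, c / N a ≤ d := by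
    refine (biUnion T hrow hdisj).le_of_subset hB (Set.iUnion₂_subset fun a _ ↦ ?_)
    rintro _ ⟨b, hb, rfl⟩
    exact hfB ⟨a.2, hb⟩
  rw [le_div_iff₀' hc, Finset.mul_sum]
  simpa only [div_eq_mul_inv] using hle

end HasLinearGrowth

end LinearGrowth

section IdealsPrimeTo

variable {R : Type*} [CommRing R]

/-- The nonzero ideals of `R` that are divisible by no prime in `S`. -/
def idealsPrimeTo (S : Set (HeightOneSpectrum R)) : Set (Ideal R) :=
  {I | I ≠ 0 ∧ ∀ P ∈ S, ¬ P.asIdeal ∣ I}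

theorem idealsPrimeTo_insert (P : HeightOneSpectrum R) (S : Set (HeightOneSpectrum R)) :
    idealsPrimeTo (insert P S) = idealsPrimeTo S \ (P.asIdeal * ·) '' idealsPrimeTo S := by
  ext I
  constructor
  · rintro ⟨hI, hS⟩
    refine ⟨⟨hI, fun Q hQ ↦ hS Q (Set.mem_insert_of_mem P hQ)⟩, ?_⟩
    rintro ⟨J, -, rfl⟩
    exact hS P (Set.mem_insert P S) (dvd_mul_right _ _)
  · rintro ⟨⟨hI, hS⟩, hPI⟩
    refine ⟨hI, Set.forall_mem_insert.mpr ⟨?_, hS⟩⟩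
    rintro ⟨J, rfl⟩
    exact hPI ⟨J, ⟨right_ne_zero_of_mul hI, fun Q hQ hQJ ↦ hS Q hQ (hQJ.mul_left _)⟩, rfl⟩

theorem mul_image_idealsPrimeTo_subset [IsDedekindDomain R] {S : Set (HeightOneSpectrum R)}
    {P : HeightOneSpectrum R} (hP : P ∉ S) :
    (P.asIdeal * ·) '' idealsPrimeTo S ⊆ idealsPrimeTo S := by
  rintro _ ⟨J, ⟨hJ, hS⟩, rfl⟩
  refine ⟨mul_ne_zero P.ne_bot hJ, fun Q hQ hdvd ↦ ?_⟩
  refine (Q.prime.dvd_or_dvd hdvd).elim (fun hQP ↦ hP ?_) (hS Q hQ)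
  have : Q = P := HeightOneSpectrum.ext
    (P.isMaximal.eq_of_le Q.isPrime.ne_top (Ideal.dvd_iff_le.mp hQP)).symm
  exact this ▸ hQ

variable (F : Type*) [Field F] [NumberField F]

theorem hasLinearGrowth_idealsPrimeTo_empty :
    HasLinearGrowth (fun I : Ideal (𝓞 F) ↦ (I.absNorm : ℝ)) (idealsPrimeTo ∅)
      (NumberField.dedekindZeta_residue F) where
  finite_le s := (Ideal.finite_setOfPred_absNorm_le (S := 𝓞 F) ⌊s⌋₊).subset
    fun _ hI ↦ Nat.le_floor hI.2
  tendsto_ncard_div := by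
    rw [NumberField.dedekindZeta_residue_def]
    refine (NumberField.Ideal.tendsto_norm_le_div_atTop₀ F).congr fun s ↦ ?_
    congr 2
    refine Nat.card_congr ((Equiv.subtypeSubtypeEquivSubtypeInter _
      fun I : Ideal (𝓞 F) ↦ (I.absNorm : ℝ) ≤ s).trans (Equiv.subtypeEquivRight fun I ↦ ?_))
    simp [idealsPrimeTo]

variable {F}

theorem exists_hasLinearGrowth_idealsPrimeTo {S : Set (HeightOneSpectrum (𝓞 F))}
    (hS : S.Finite) :
    ∃ c > 0, HasLinearGrowth (fun I : Ideal (𝓞 F) ↦ (I.absNorm : ℝ)) (idealsPrimeTo S) c := by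
  induction S, hS using Set.Finite.induction_on with
  | empty =>
    exact ⟨_, NumberField.dedekindZeta_residue_pos F, hasLinearGrowth_idealsPrimeTo_empty F⟩
  | @insert P S hP _ ih =>
    obtain ⟨c, hc, h⟩ := ih
    have hn : (1 : ℝ) < P.asIdeal.absNorm := by
      have h0 : P.asIdeal.absNorm ≠ 0 := Ideal.absNorm_eq_zero_iff.not.mpr P.ne_bot
      have h1 : P.asIdeal.absNorm ≠ 1 := Ideal.absNorm_eq_one_iff.not.mpr P.isPrime.ne_top
      exact_mod_cast (by lia : 1 < P.asIdeal.absNorm)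
    refine ⟨c - c / P.asIdeal.absNorm, sub_pos.mpr (div_lt_self hc hn), ?_⟩
    rw [idealsPrimeTo_insert]
    refine h.sdiff (h.image (mul_right_injective₀ P.ne_bot).injOn (zero_lt_one.trans hn)
      fun I _ ↦ ?_) (mul_image_idealsPrimeTo_subset hP)
    rw [map_mul, Nat.cast_mul]

end IdealsPrimeTo

section MapPrimeFactors

open UniqueFactorizationMonoid

variable {A B : Type*} [CommRing A] [IsDedekindDomain A] [CommRing B] [IsDedekindDomain B]

/-- The ideal of `B` obtained from the prime factorization of `I` by replacing each prime factor
`P` by `q P`. -/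
noncomputable def mapPrimeFactors (q : Ideal A → Ideal B) (I : Ideal A) : Ideal B :=
  ((normalizedFactors I).map q).prod

theorem normalizedFactors_mapPrimeFactors {q : Ideal A → Ideal B} {I : Ideal A}
    (hq : ∀ P ∈ normalizedFactors I, Prime (q P)) :
    normalizedFactors (mapPrimeFactors q I) = (normalizedFactors I).map q :=
  normalizedFactors_prod_of_prime fun _ hQ ↦
    have ⟨P, hP, hPQ⟩ := Multiset.mem_map.mp hQ
    hPQ ▸ hq P hP

theorem mapPrimeFactors_ne_zero {q : Ideal A → Ideal B} {I : Ideal A}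
    (hq : ∀ P ∈ normalizedFactors I, Prime (q P)) : mapPrimeFactors q I ≠ 0 :=
  Multiset.prod_ne_zero fun h ↦
    have ⟨P, hP, hP0⟩ := Multiset.mem_map.mp h
    (hq P hP).ne_zero hP0

theorem absNorm_mapPrimeFactors [Module.Free ℤ A] [Module.Free ℤ B]
    {q : Ideal A → Ideal B} {I : Ideal A} (hI : I ≠ 0)
    (hq : ∀ P ∈ normalizedFactors I, (q P).absNorm = P.absNorm) :
    (mapPrimeFactors q I).absNorm = I.absNorm := by
  conv_rhs => rw [← Ideal.prod_normalizedFactors_eq_self hI, map_multiset_prod]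
  rw [mapPrimeFactors, map_multiset_prod, Multiset.map_map]
  exact congrArg Multiset.prod (Multiset.map_congr rfl hq)

theorem map_filter_map_add_map {α β : Type*} [DecidableEq β] {q₁ q₂ : α → β} {r : β → α}
    {s t : Multiset α} (h₁ : ∀ a ∈ s, r (q₁ a) = a) (h₂ : ∀ a ∈ t, r (q₂ a) = a)
    (hne : ∀ a ∈ t, q₁ a ≠ q₂ a) :
    ((s.map q₁ + t.map q₂).filter fun b ↦ q₁ (r b) = b).map r = s := by
  have hs : (s.map q₁).filter (fun b ↦ q₁ (r b) = b) = s.map q₁ := by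
    refine Multiset.filter_eq_self.mpr fun b hb ↦ ?_
    obtain ⟨a, ha, rfl⟩ := Multiset.mem_map.mp hb
    rw [h₁ a ha]
  have ht : (t.map q₂).filter (fun b ↦ q₁ (r b) = b) = 0 := by
    refine Multiset.filter_eq_nil.mpr fun b hb ↦ ?_
    obtain ⟨a, ha, rfl⟩ := Multiset.mem_map.mp hb
    rw [h₂ a ha]
    exact hne a ha
  rw [Multiset.filter_add, hs, ht, add_zero, Multiset.map_map]
  exact (Multiset.map_congr rfl h₁).trans s.map_id

theorem injOn_mapPrimeFactors_mul {q₁ q₂ : Ideal A → Ideal B} {r : Ideal B → Ideal A}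
    {D : Set (Ideal A)} (hq₁ : ∀ P ∈ D, Prime (q₁ P)) (hq₂ : ∀ P ∈ D, Prime (q₂ P))
    (hr₁ : Set.LeftInvOn r q₁ D) (hr₂ : Set.LeftInvOn r q₂ D) (hne : ∀ P ∈ D, q₁ P ≠ q₂ P)
    {𝒜 : Set (Ideal A)} (h0 : 0 ∉ 𝒜) (hD : ∀ I ∈ 𝒜, ∀ P ∈ normalizedFactors I, P ∈ D) :
    Set.InjOn (fun IJ : Ideal A × Ideal A ↦ mapPrimeFactors q₁ IJ.1 * mapPrimeFactors q₂ IJ.2)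
      (𝒜 ×ˢ 𝒜) := by
  classical
  have hfactors {I J : Ideal A} (hI : I ∈ 𝒜) (hJ : J ∈ 𝒜) :
      normalizedFactors (mapPrimeFactors q₁ I * mapPrimeFactors q₂ J) =
        (normalizedFactors I).map q₁ + (normalizedFactors J).map q₂ := by
    have h₁ P (hP : P ∈ normalizedFactors I) : Prime (q₁ P) := hq₁ P (hD I hI P hP)
    have h₂ P (hP : P ∈ normalizedFactors J) : Prime (q₂ P) := hq₂ P (hD J hJ P hP)
    rw [normalizedFactors_mul (mapPrimeFactors_ne_zero h₁) (mapPrimeFactors_ne_zero h₂),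
      normalizedFactors_mapPrimeFactors h₁, normalizedFactors_mapPrimeFactors h₂]
  have hinj {I J : Ideal A} (hI : I ∈ 𝒜) (hJ : J ∈ 𝒜)
      (h : normalizedFactors I = normalizedFactors J) : I = J := by
    rw [← Ideal.prod_normalizedFactors_eq_self (ne_of_mem_of_not_mem hI h0), h,
      Ideal.prod_normalizedFactors_eq_self (ne_of_mem_of_not_mem hJ h0)]
  rintro ⟨I, J⟩ ⟨hI, hJ⟩ ⟨I', J'⟩ ⟨hI', hJ'⟩ h
  have hsum := congrArg normalizedFactors h
  simp only [hfactors hI hJ, hfactors hI' hJ'] at hsum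
  have hfst {I J : Ideal A} (hI : I ∈ 𝒜) (hJ : J ∈ 𝒜) := map_filter_map_add_map
    (fun P hP ↦ hr₁ (hD I hI P hP)) (fun P hP ↦ hr₂ (hD J hJ P hP))
    fun P hP ↦ hne P (hD J hJ P hP)
  have hsnd {I J : Ideal A} (hI : I ∈ 𝒜) (hJ : J ∈ 𝒜) := map_filter_map_add_map
    (fun P hP ↦ hr₂ (hD J hJ P hP)) (fun P hP ↦ hr₁ (hD I hI P hP))
    fun P hP ↦ (hne P (hD I hI P hP)).symm
  refine Prod.ext (hinj hI hI' ?_) (hinj hJ hJ' ?_)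
  · rw [← hfst hI hJ, hsum, hfst hI' hJ']
  · rw [← hsnd hI hJ, add_comm, hsum, add_comm, hsnd hI' hJ']

end MapPrimeFactors

section DegreeOne

open UniqueFactorizationMonoid

/-- The primes of `B` above `P` of relative degree one. -/
def degreeOnePrimesOver {A : Type*} (B : Type*) [CommRing A] [CommRing B] [Algebra A B]
    (P : Ideal A) : Set (Ideal B) :=
  {Q ∈ P.primesOver B | Q.inertiaDeg A = 1}

section

variable {A B : Type*} [CommRing A] [CommRing B] [Algebra A B] {P : Ideal A} {Q : Ideal B}

theorem under_of_mem_degreeOnePrimesOver (hQ : Q ∈ degreeOnePrimesOver B P) : Q.under A = P :=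
  have := hQ.1.2
  (Ideal.over_def Q P).symm

theorem prime_of_mem_degreeOnePrimesOver [IsDedekindDomain B] [FaithfulSMul A B] (hP : P ≠ ⊥)
    (hQ : Q ∈ degreeOnePrimesOver B P) : Prime Q :=
  have := hQ.1.2
  Ideal.prime_of_isPrime (Ideal.ne_bot_of_liesOver_of_ne_bot hP Q) hQ.1.1

theorem absNorm_of_mem_degreeOnePrimesOver [IsDedekindDomain A] [IsDedekindDomain B]
    [Module.Free ℤ A] [Module.Free ℤ B] [Module.Finite A B] (hP : Prime P)
    (hQ : Q ∈ degreeOnePrimesOver B P) : Q.absNorm = P.absNorm := by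
  have := hQ.1.1
  have := hQ.1.2
  have hPprime := Ideal.isPrime_of_prime hP
  have : P.IsMaximal := hPprime.isMaximal hP.ne_zero
  have : Q.IsMaximal := Ideal.IsMaximal.of_liesOver_isMaximal Q P
  rw [Ideal.absNorm_eq_pow_inertiaDeg'_of_liesOver Q P hPprime hP.ne_zero,
    Ideal.inertiaDeg'_eq_inertiaDeg, hQ.2, pow_one]

end

theorem infinite_not_nontrivial_degreeOnePrimesOver (F L : Type*) [Field F] [NumberField F]
    [Field L] [NumberField L] [Algebra F L] :
    {P : HeightOneSpectrum (𝓞 F) |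
      ¬ (degreeOnePrimesOver (𝓞 L) P.asIdeal).Nontrivial}.Infinite := by
  intro hS
  set S := {P : HeightOneSpectrum (𝓞 F) | ¬ (degreeOnePrimesOver (𝓞 L) P.asIdeal).Nontrivial}
  let D := {P : Ideal (𝓞 F) | Prime P ∧ (degreeOnePrimesOver (𝓞 L) P).Nontrivial}
  have hD : ∀ I ∈ idealsPrimeTo S, ∀ P ∈ normalizedFactors I, P ∈ D := fun I hI P hP ↦
    have hprime := prime_of_normalized_factor P hP
    ⟨hprime, by_contra fun hPS ↦ hI.2 ⟨P, Ideal.isPrime_of_prime hprime, hprime.ne_zero⟩ hPS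
      (dvd_of_mem_normalizedFactors hP)⟩
  choose! q₁ h₁ q₂ h₂ hne using fun P (hP : P ∈ D) ↦ hP.2
  have hprime₁ P (hP : P ∈ D) : Prime (q₁ P) :=
    prime_of_mem_degreeOnePrimesOver hP.1.ne_zero (h₁ P hP)
  have hprime₂ P (hP : P ∈ D) : Prime (q₂ P) :=
    prime_of_mem_degreeOnePrimesOver hP.1.ne_zero (h₂ P hP)
  obtain ⟨c, hc, hgrowth⟩ := exists_hasLinearGrowth_idealsPrimeTo hS
  refine hgrowth.not_injOn_prod hc ?_ (hasLinearGrowth_idealsPrimeTo_empty L) ?_ ?_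
    (injOn_mapPrimeFactors_mul hprime₁ hprime₂
      (fun P hP ↦ under_of_mem_degreeOnePrimesOver (h₁ P hP))
      (fun P hP ↦ under_of_mem_degreeOnePrimesOver (h₂ P hP)) hne (fun h ↦ h.1 rfl) hD)
  · exact fun I hI ↦ Nat.cast_pos.mpr (Nat.pos_of_ne_zero (Ideal.absNorm_eq_zero_iff.not.mpr hI.1))
  · rintro ⟨I, J⟩ ⟨hI, hJ⟩
    exact ⟨mul_ne_zero (mapPrimeFactors_ne_zero fun P hP ↦ hprime₁ P (hD I hI P hP))
      (mapPrimeFactors_ne_zero fun P hP ↦ hprime₂ P (hD J hJ P hP)), fun P hP ↦ hP.elim⟩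
  · intro I hI J hJ
    have hnorm₁ := absNorm_mapPrimeFactors hI.1 fun P hP ↦
      absNorm_of_mem_degreeOnePrimesOver (hD I hI P hP).1 (h₁ P (hD I hI P hP))
    have hnorm₂ := absNorm_mapPrimeFactors hJ.1 fun P hP ↦
      absNorm_of_mem_degreeOnePrimesOver (hD J hJ P hP).1 (h₂ P (hD J hJ P hP))
    rw [map_mul, hnorm₁, hnorm₂, Nat.cast_mul]

end DegreeOne

section Decomposition

open scoped Pointwise

theorem inertiaDeg_eq_one_of_stabilizer_eq_bot {R S : Type*} (G : Type*) [CommRing R] [CommRing S]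
    [Algebra R S] [Group G] [Finite G] [MulSemiringAction G S] [IsGaloisGroup G R S] (P : Ideal R)
    [P.IsPrime] [PerfectField P.ResidueField] (Q : Ideal S) [Q.IsPrime] [Q.LiesOver P]
    (h : MulAction.stabilizer G Q = ⊥) : Q.inertiaDeg R = 1 := by
  have hcard := Ideal.card_stabilizer_eq_card_inertia_mul_finrank (G := G) P Q
  rw [h, Subgroup.card_bot] at hcard
  exact Nat.eq_one_of_mul_eq_one_left hcard.symm

theorem infinite_exists_stabilizer_ne_bot (F L : Type*) [Field F] [NumberField F] [Field L]
    [NumberField L] [Algebra F L] [IsGalois F L] [Nontrivial Gal(L/F)] :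
    {P : HeightOneSpectrum (𝓞 F) |
      ∃ Q ∈ P.asIdeal.primesOver (𝓞 L), MulAction.stabilizer Gal(L/F) Q ≠ ⊥}.Infinite := by
  refine (infinite_not_nontrivial_degreeOnePrimesOver F L).mono fun P hP ↦ ?_
  rw [Set.mem_ofPred_eq]
  by_contra! hstab
  have hdeg : ∀ Q ∈ P.asIdeal.primesOver (𝓞 L), Q ∈ degreeOnePrimesOver (𝓞 L) P.asIdeal := by
    rintro Q ⟨hQ, hQP⟩
    exact ⟨⟨hQ, hQP⟩, inertiaDeg_eq_one_of_stabilizer_eq_bot Gal(L/F) P.asIdeal Q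
      (hstab Q ⟨hQ, hQP⟩)⟩
  obtain ⟨Q, hQ, hQP⟩ := (inferInstance : Nonempty (P.asIdeal.primesOver (𝓞 L)))
  obtain ⟨σ, hσ⟩ := exists_ne (1 : Gal(L/F))
  refine hP ⟨σ • Q, hdeg _ ⟨inferInstance, inferInstance⟩, Q, hdeg Q ⟨hQ, hQP⟩, fun h ↦ hσ ?_⟩
  rwa [← MulAction.mem_stabilizer_iff, hstab Q ⟨hQ, hQP⟩, Subgroup.mem_bot] at h

end Decomposition

/-- `x` is an `m`-th power modulo all but finitely many primes of `A`. -/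
def IsPowModAlmostAll {A : Type*} [CommRing A] (m : ℕ) (x : A) : Prop :=
  {P : HeightOneSpectrum A | ¬ ∃ a : A, a ^ m - x ∈ P.asIdeal}.Finite

namespace IsPowModAlmostAll

theorem of_dvd {A : Type*} [CommRing A] {m n : ℕ} {x : A} (h : IsPowModAlmostAll n x)
    (hmn : m ∣ n) : IsPowModAlmostAll m x := by
  obtain ⟨d, rfl⟩ := hmn
  refine Set.Finite.subset h fun P hP ⟨a, ha⟩ ↦ hP ⟨a ^ d, ?_⟩
  rwa [← pow_mul, mul_comm d]

theorem map_algebraMap {A : Type*} (B : Type*) [CommRing A] [IsDedekindDomain A] [CommRing B]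
    [IsDedekindDomain B] [Algebra A B] [Module.IsTorsionFree A B] [Algebra.IsIntegral A B]
    {m : ℕ} {x : A} (h : IsPowModAlmostAll m x) : IsPowModAlmostAll m (algebraMap A B x) := by
  have hfiber : ∀ P ∈ {P : HeightOneSpectrum A | ¬ ∃ a : A, a ^ m - x ∈ P.asIdeal},
      (HeightOneSpectrum.under A (B := B) ⁻¹' {P}).Finite := by
    intro P _
    have := P.isMaximal
    refine Set.Finite.of_finite_image ((IsDedekindDomain.primesOver_finite P.asIdeal B).subset ?_)
      (fun _ _ _ _ ↦ HeightOneSpectrum.ext)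
    rintro _ ⟨Q, rfl, rfl⟩
    exact ⟨Q.isPrime, ⟨rfl⟩⟩
  refine (Set.Finite.preimage' h hfiber).subset fun Q hQ ⟨a, ha⟩ ↦
    hQ ⟨algebraMap A B a, ?_⟩
  rwa [← map_pow, ← map_sub]

end IsPowModAlmostAll

section Kummer

open scoped Pointwise

theorem eq_of_pow_eq_pow_of_sub_mem {B : Type*} [CommRing B] [IsDomain B] (Q : Ideal B)
    [hQ : Q.IsPrime] {m : ℕ} (hm : (m : B) ∉ Q) {b c : B} (hb : b ∉ Q) (hcb : c ^ m = b ^ m)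
    (h : c - b ∈ Q) : c = b := by
  by_contra hne
  have hsum : ∑ i ∈ Finset.range m, c ^ i * b ^ (m - 1 - i) = 0 := by
    have hmul := (Commute.all c b).mul_geom_sum₂ m
    rw [hcb, sub_self] at hmul
    exact (mul_eq_zero.mp hmul).resolve_left (sub_ne_zero.mpr hne)
  have hmem : (m : B) * b ^ (m - 1) ∈ Q := by
    rw [← Ideal.Quotient.eq_zero_iff_mem, map_mul, map_pow, map_natCast, ← geom_sum₂_self,
      ← map_zero (Ideal.Quotient.mk Q), ← hsum, RingHom.map_geom_sum₂, Ideal.Quotient.eq.mpr h]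
  exact (hQ.mem_or_mem hmem).elim hm fun hbQ ↦ hb (hQ.mem_of_pow_mem _ hbQ)

variable {A B : Type*} [CommRing A] [CommRing B] [IsDomain B] [Algebra A B] [FaithfulSMul A B]
  {Q : Ideal B} [Q.IsPrime] {m : ℕ} [NeZero m] {ζ : A} {x a : A} {b : B}

theorem exists_sub_algebraMap_mem (hζ : IsPrimitiveRoot ζ m)
    (h : b ^ m - algebraMap A B a ^ m ∈ Q) : ∃ c : A, b - algebraMap A B c ∈ Q := by
  have hζB := hζ.map_of_injective (FaithfulSMul.algebraMap_injective A B)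
  rw [hζB.pow_sub_pow_eq_prod_sub_mul _ _ (NeZero.pos m), Ideal.IsPrime.prod_mem_iff] at h
  obtain ⟨ω, hω, hωQ⟩ := h
  obtain ⟨i, -, rfl⟩ := hζB.eq_pow_of_pow_eq_one
    ((Polynomial.mem_nthRootsFinset (NeZero.pos m) _).mp hω)
  exact ⟨ζ ^ i * a, by rwa [map_mul, map_pow]⟩

theorem smul_eq_of_pow_eq_algebraMap {G : Type*} [Group G] [MulSemiringAction G B]
    [SMulCommClass G A B] {g : G} (hg : g • Q = Q) (hζ : IsPrimitiveRoot ζ m)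
    (hb : b ^ m = algebraMap A B x) (hx : algebraMap A B x ∉ Q) (hm : (m : B) ∉ Q)
    (ha : algebraMap A B (a ^ m - x) ∈ Q) : g • b = b := by
  obtain ⟨c, hc⟩ : ∃ c : A, b - algebraMap A B c ∈ Q := by
    refine exists_sub_algebraMap_mem (a := a) hζ ?_
    rwa [hb, ← map_pow, ← map_sub, ← neg_mem_iff, ← map_neg, neg_sub]
  have hgc : g • b - algebraMap A B c ∈ Q := by
    have hmem := Ideal.smul_mem_pointwise_smul g _ Q hc
    rwa [hg, smul_sub, smul_algebraMap] at hmem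
  refine eq_of_pow_eq_pow_of_sub_mem Q hm (fun hbQ ↦ hx ?_) ?_ ?_
  · exact hb ▸ Q.pow_mem_of_mem hbQ m (NeZero.pos m)
  · rw [← smul_pow', hb, smul_algebraMap]
  · simpa only [sub_sub_sub_cancel_right] using Q.sub_mem hgc hc

theorem finite_setOf_mem_asIdeal {R : Type*} [CommRing R] [IsDedekindDomain R] {z : R}
    (hz : z ≠ 0) : {P : HeightOneSpectrum R | z ∈ P.asIdeal}.Finite :=
  (Ideal.finite_factors (I := Ideal.span {z}) (by simpa using hz)).subset fun _ hP ↦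
    Ideal.dvd_span_singleton.mpr hP

open Polynomial

theorem isGalois_of_isSplittingField_X_pow_sub_C_of_ne_zero {K L : Type*} [Field K] [CharZero K]
    [Field L] [Algebra K L] (m : ℕ) [NeZero m] {x : K} (hx : x ≠ 0)
    [IsSplittingField K L (X ^ m - C x)] : IsGalois K L :=
  .of_separable_splitting_field (separable_X_pow_sub_C x (NeZero.ne (m : K)) hx)

theorem finite_exists_stabilizer_ne_bot {K L : Type*} [Field K] [NumberField K] [Field L]
    [NumberField L] [Algebra K L] {ζ : K} (hζ : IsPrimitiveRoot ζ m) {x : 𝓞 K} (hx : x ≠ 0)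
    [IsSplittingField K L (X ^ m - C (x : K))] (h : IsPowModAlmostAll m x) :
    {P : HeightOneSpectrum (𝓞 K) |
      ∃ Q ∈ P.asIdeal.primesOver (𝓞 L), MulAction.stabilizer Gal(L/K) Q ≠ ⊥}.Finite := by
  refine ((h.union (finite_setOf_mem_asIdeal hx)).union
    (finite_setOf_mem_asIdeal (NeZero.ne (m : 𝓞 K)))).subset fun P hP ↦ ?_
  by_contra hgood
  simp only [Set.mem_union, Set.mem_ofPred_eq, not_or, not_not] at hgood
  obtain ⟨⟨⟨a, ha⟩, hxP⟩, hmP⟩ := hgood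
  obtain ⟨Q, ⟨hQprime, hQP⟩, hQ⟩ := hP
  refine hQ ((Subgroup.eq_bot_iff_forall _).mpr fun τ hτ ↦ ?_)
  have hmem (z : 𝓞 K) : algebraMap (𝓞 K) (𝓞 L) z ∈ Q ↔ z ∈ P.asIdeal :=
    (Ideal.mem_of_liesOver Q P.asIdeal z).symm
  have : IsGalois K L := isGalois_of_isSplittingField_X_pow_sub_C_of_ne_zero m
    (NumberField.RingOfIntegers.coe_ne_zero_iff.mpr hx)
  have hfix : Set.EqOn τ (AlgEquiv.refl : Gal(L/K)) ((X ^ m - C (x : K)).rootSet L) := by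
    intro β hβ
    have hβx : β ^ m = algebraMap K L x := by
      simpa [sub_eq_zero] using (mem_rootSet.mp hβ).2
    have hβint : IsIntegral ℤ β :=
      .of_pow (NeZero.pos m) (hβx ▸ x.isIntegral_coe.algebraMap)
    have hsmul : τ • (⟨β, hβint⟩ : 𝓞 L) = ⟨β, hβint⟩ := by
      refine smul_eq_of_pow_eq_algebraMap (Q := Q) (x := x) (a := a) hτ
        hζ.toInteger_isPrimitiveRoot (NumberField.RingOfIntegers.ext hβx) ((hmem x).not.mpr hxP) ?_
        ((hmem _).mpr ha)
      rw [← map_natCast (algebraMap (𝓞 K) (𝓞 L)), hmem]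
      exact hmP
    exact congrArg (algebraMap (𝓞 L) L) hsmul
  exact AlgEquiv.coe_toAlgHom_injective
    (AlgHom.ext_of_adjoin_eq_top (IsSplittingField.adjoin_rootSet L (X ^ m - C (x : K))) hfix)

theorem IsPowModAlmostAll.exists_pow_eq_of_isPrimitiveRoot {K : Type*} [Field K] [NumberField K]
    {ζ : K} (hζ : IsPrimitiveRoot ζ m) {x : 𝓞 K} (h : IsPowModAlmostAll m x) :
    ∃ y : K, y ^ m = x := by
  rcases eq_or_ne x 0 with rfl | hx
  · exact ⟨0, by simp [NeZero.ne m]⟩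
  let L := (X ^ m - C (x : K)).SplittingField
  have : NumberField L := .of_module_finite K L
  have : IsGalois K L := isGalois_of_isSplittingField_X_pow_sub_C_of_ne_zero m
    (NumberField.RingOfIntegers.coe_ne_zero_iff.mpr hx)
  have : Subsingleton Gal(L/K) := not_nontrivial_iff_subsingleton.mp fun _ ↦
    infinite_exists_stabilizer_ne_bot K L (finite_exists_stabilizer_ne_bot hζ hx h)
  obtain ⟨y, hy⟩ := (IsGalois.mem_range_algebraMap_iff_fixed
    (rootOfSplitsXPowSubC (NeZero.pos m) (x : K) L)).mpr fun (σ : Gal(L/K)) ↦ by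
      rw [Subsingleton.elim σ (1 : Gal(L/K)), AlgEquiv.one_apply]
  exact ⟨y, (algebraMap K L).injective (by rw [map_pow, hy, rootOfSplitsXPowSubC_pow])⟩

end Kummer

section CyclicDescent

open Finset

theorem padicValNat_geom_sum {p t n : ℕ} [hp : Fact p.Prime] (hp2 : Odd p) (ht : t ≠ 0)
    (hpt : p ∣ t) (hn : n ≠ 0) :
    padicValNat p (∑ i ∈ range n, (t + 1) ^ i) = padicValNat p n := by
  have hsum : ∑ i ∈ range n, (t + 1) ^ i ≠ 0 :=
    (sum_pos (fun i _ ↦ by positivity) (by simpa using hn)).ne'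
  have hp1 : ¬ p ∣ t + 1 := fun h ↦ hp.out.not_dvd_one ((Nat.dvd_add_right hpt).mp h)
  have hlte := padicValNat.pow_sub_pow hp2 (x := t + 1) (y := 1) (by lia) (by simpa using hpt) hp1
    hn
  rw [one_pow, add_tsub_cancel_right, ← geom_sum_mul_add, add_tsub_cancel_right,
    padicValNat.mul hsum ht, add_comm] at hlte
  exact add_left_cancel hlte

theorem exists_dvd_mul_add_of_gcd_dvd {m t b : ℕ} [NeZero m] (h : t.gcd m ∣ b) :
    ∃ c : ℕ, m ∣ t * c + b := by
  obtain ⟨x, y, hxy⟩ := Int.gcd_dvd_iff.mp (Int.gcd_natCast_natCast t m ▸ h)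
  obtain ⟨c, hc⟩ := ZMod.natCast_zmod_surjective (n := m) (-x : ZMod m)
  refine ⟨c, (ZMod.natCast_eq_zero_iff _ _).mp ?_⟩
  have hb := congrArg (Int.cast : ℤ → ZMod m) hxy
  push_cast [ZMod.natCast_self] at hb ⊢
  rw [hc, hb]
  ring

theorem exists_dvd_mul_add_of_dvd_mul_geom_sum {p r t b : ℕ} (hp : p.Prime) (hp2 : p ≠ 2)
    (h : ∀ n, p ^ r ∣ (t + 1) ^ n - 1 → p ^ r ∣ b * ∑ i ∈ range n, (t + 1) ^ i) :
    ∃ c : ℕ, p ^ r ∣ t * c + b := by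
  have : Fact p.Prime := ⟨hp⟩
  rcases eq_or_ne t 0 with rfl | ht
  · exact ⟨0, by simpa using h 1⟩
  rcases eq_or_ne b 0 with rfl | hb
  · exact ⟨0, by simp⟩
  have : NeZero (p ^ r) := ⟨pow_ne_zero r hp.ne_zero⟩
  refine exists_dvd_mul_add_of_gcd_dvd ?_
  obtain ⟨v, hvr, hgcd⟩ := (Nat.dvd_prime_pow hp).mp (Nat.gcd_dvd_right t (p ^ r))
  rw [hgcd, padicValNat_dvd_iff_le hb]
  rcases Nat.eq_zero_or_pos v with rfl | hv
  · exact Nat.zero_le _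
  have hvt : v ≤ padicValNat p t :=
    (padicValNat_dvd_iff_le ht).mp (hgcd ▸ Nat.gcd_dvd_left t (p ^ r))
  have hpt : p ∣ t := dvd_of_one_le_padicValNat (hv.trans_le hvt)
  set n := p ^ (r - padicValNat p t)
  have hn : n ≠ 0 := pow_ne_zero _ hp.ne_zero
  have hsum : padicValNat p (∑ i ∈ range n, (t + 1) ^ i) = r - padicValNat p t := by
    rw [padicValNat_geom_sum (hp.odd_of_ne_two hp2) ht hpt hn, padicValNat.prime_pow]
  have hsum0 : ∑ i ∈ range n, (t + 1) ^ i ≠ 0 :=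
    (sum_pos (fun i _ ↦ by positivity) (by simpa using hn)).ne'
  have hdvd : p ^ r ∣ (t + 1) ^ n - 1 := by
    rw [← geom_sum_mul_add, add_tsub_cancel_right,
      padicValNat_dvd_iff_le (mul_ne_zero hsum0 ht), padicValNat.mul hsum0 ht, hsum]
    lia
  have hle := h n hdvd
  rw [padicValNat_dvd_iff_le (mul_ne_zero hb hsum0), padicValNat.mul hb hsum0, hsum] at hle
  lia

section MulDistribMulAction

variable {G M : Type*} [Monoid G]

theorem pow_smul_eq_pow_pow [Monoid M] [MulDistribMulAction G M] {g : G} {ζ : M} {a : ℕ}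
    (h : g • ζ = ζ ^ a) (n : ℕ) : g ^ n • ζ = ζ ^ a ^ n := by
  induction n with
  | zero => simp
  | succ n ih => rw [pow_succ, mul_smul, h, smul_pow', ih, ← pow_mul, ← pow_succ]

theorem pow_smul_eq_pow_geom_sum_mul [CommMonoid M] [MulDistribMulAction G M] {g : G} {ζ y : M}
    {a b : ℕ} (hζ : g • ζ = ζ ^ a) (hy : g • y = ζ ^ b * y) (n : ℕ) :
    g ^ n • y = ζ ^ (b * ∑ i ∈ range n, a ^ i) * y := by
  induction n with
  | zero => simp
  | succ n ih =>
    rw [pow_succ, mul_smul, hy, smul_mul', smul_pow', pow_smul_eq_pow_pow hζ, ih, ← pow_mul,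
      ← mul_assoc, ← pow_add, sum_range_succ, mul_add, mul_comm b (a ^ n),
      add_comm (a ^ n * b)]

theorem exists_smul_pow_mul_eq_self [CommMonoidWithZero M] [IsCancelMulZero M]
    [MulDistribMulAction G M] {p r t b : ℕ} (hp : p.Prime) (hp2 : p ≠ 2) {ζ y : M}
    (hζ : IsPrimitiveRoot ζ (p ^ r)) (hy : y ≠ 0) {g : G} (hgζ : g • ζ = ζ ^ (t + 1))
    (hgy : g • y = ζ ^ b * y) (hfix : ∀ n, g ^ n • ζ = ζ → g ^ n • y = y) :
    ∃ c : ℕ, g • (ζ ^ c * y) = ζ ^ c * y := by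
  obtain ⟨c, hc⟩ := exists_dvd_mul_add_of_dvd_mul_geom_sum (t := t) (b := b) hp hp2 fun n hn ↦ by
    have hgn : g ^ n • ζ = ζ := by
      rw [pow_smul_eq_pow_pow hgζ, ← Nat.sub_add_cancel (Nat.one_le_pow n (t + 1) t.succ_pos),
        pow_succ, (hζ.pow_eq_one_iff_dvd _).mpr hn, one_mul]
    rw [← hζ.pow_eq_one_iff_dvd]
    refine mul_right_cancel₀ hy ?_
    rw [← pow_smul_eq_pow_geom_sum_mul hgζ hgy, hfix n hgn, one_mul]
  refine ⟨c, ?_⟩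
  rw [smul_mul', smul_pow', hgζ, hgy, ← mul_assoc, ← pow_mul, ← pow_add, add_one_mul,
    add_right_comm, pow_add, (hζ.pow_eq_one_iff_dvd _).mpr hc, one_mul]

end MulDistribMulAction

variable {k K : Type*} [Field k] [Field K] [Algebra k K]

theorem isCyclic_gal_of_isCyclotomicExtension_odd_prime_pow {p : ℕ} (r : ℕ) (hp : p.Prime)
    (hp2 : p ≠ 2) [IsCyclotomicExtension {p ^ r} k K] : IsCyclic Gal(K/k) := by
  have : NeZero (p ^ r) := ⟨pow_ne_zero r hp.ne_zero⟩
  have : IsCyclic (ZMod (p ^ r))ˣ := ZMod.isCyclic_units_of_prime_pow p hp hp2 r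
  exact isCyclic_of_injective _
    ((IsCyclotomicExtension.zeta_spec (p ^ r) k K).autToPow_injective (K := k))

theorem algEquiv_eq_of_apply_eq_of_isPrimitiveRoot {m : ℕ} [IsCyclotomicExtension {m} k K] {ζ : K}
    (hζ : IsPrimitiveRoot ζ m) {σ τ : Gal(K/k)} (h : σ ζ = τ ζ) : σ = τ := by
  refine IsCyclotomicExtension.algEquiv_eq_of_apply_eq {m} k K fun n hn _ ↦ ?_
  exact ⟨ζ, Set.mem_singleton_iff.mp hn ▸ hζ, h⟩

theorem exists_pow_eq_of_pow_eq_algebraMap_of_odd_prime_pow {p r : ℕ} (hp : p.Prime)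
    (hp2 : p ≠ 2) [IsCyclotomicExtension {p ^ r} k K] {x : k} {y : K}
    (hy : y ^ p ^ r = algebraMap k K x) : ∃ z : k, z ^ p ^ r = x := by
  have : NeZero (p ^ r) := ⟨pow_ne_zero r hp.ne_zero⟩
  have : FiniteDimensional k K := IsCyclotomicExtension.finite_of_singleton (p ^ r) k K
  have : IsGalois k K := IsCyclotomicExtension.isGalois {p ^ r} k K
  rcases eq_or_ne y 0 with rfl | hy0
  · rw [zero_pow (NeZero.ne _), eq_comm, map_eq_zero] at hy
    exact ⟨0, by rw [hy, zero_pow (NeZero.ne _)]⟩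
  obtain ⟨σ, hσ⟩ := (isCyclic_gal_of_isCyclotomicExtension_odd_prime_pow (k := k) (K := K) r hp
    hp2).exists_generator
  have hζ := IsCyclotomicExtension.zeta_spec (p ^ r) k K
  set ζ := IsCyclotomicExtension.zeta (p ^ r) k K
  obtain ⟨t, ht⟩ : ∃ t, σ • ζ = ζ ^ (t + 1) := by
    refine ⟨(hζ.autToPow k σ : ZMod (p ^ r)).val + (p ^ r - 1), ?_⟩
    rw [add_assoc, Nat.sub_add_cancel NeZero.one_le, pow_add, hζ.pow_eq_one, mul_one,
      hζ.autToPow_spec k σ, AlgEquiv.smul_def]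
  obtain ⟨b, hb⟩ : ∃ b, σ • y = ζ ^ b * y := by
    obtain ⟨b, -, hb⟩ := hζ.eq_pow_of_pow_eq_one (ξ := σ • y / y) (by
      rw [div_pow, ← smul_pow', hy, smul_algebraMap, ← hy, div_self (pow_ne_zero _ hy0)])
    exact ⟨b, by rw [hb, div_mul_cancel₀ _ hy0]⟩
  obtain ⟨c, hc⟩ := exists_smul_pow_mul_eq_self hp hp2 hζ hy0 ht hb fun n hn ↦ by
    rw [algEquiv_eq_of_apply_eq_of_isPrimitiveRoot hζ (τ := 1) hn, one_smul]
  obtain ⟨z, hz⟩ := (IsGalois.mem_range_algebraMap_iff_fixed (ζ ^ c * y)).mpr fun τ ↦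
    (Subgroup.zpowers_le (H := MulAction.stabilizer Gal(K/k) (ζ ^ c * y))).mpr hc (hσ τ)
  refine ⟨z, (algebraMap k K).injective ?_⟩
  rw [map_pow, hz, mul_pow, hy, pow_right_comm, hζ.pow_eq_one, one_pow, one_mul]

theorem exists_sq_eq_of_pow_four_eq_sq {R : Type*} [CommRing R] [IsDomain R] {i y u : R}
    (hi : IsPrimitiveRoot i 4) (hy : y ^ 4 = u ^ 2) : ∃ w : R, w ^ 2 = u := by
  have hyu : (y ^ 2) ^ 2 = u ^ 2 := by rw [← pow_mul, hy]
  rcases sq_eq_sq_iff_eq_or_eq_neg.mp hyu with hyu | hyu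
  · exact ⟨y, hyu⟩
  · have hi2 : i ^ 2 = -1 := (hi.pow four_pos (b := 2) rfl).eq_neg_one_of_two_right
    exact ⟨i * y, by rw [mul_pow, hi2, hyu, neg_one_mul, neg_neg]⟩

theorem apply_eq_self_or_eq_neg_of_sq_eq {z : K} {a : k} (hz : z ^ 2 = algebraMap k K a)
    (σ : Gal(K/k)) : σ z = z ∨ σ z = -z :=
  sq_eq_sq_iff_eq_or_eq_neg.mp (by rw [← map_pow, hz, AlgEquiv.commutes])

-- `Gal(K/k)` has order at most two, and a nontrivial `σ` that negates `w` also negates `i`.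
theorem mem_range_or_mul_mem_range_of_sq_eq [IsCyclotomicExtension {4} k K] {i w : K}
    (hi : IsPrimitiveRoot i 4) {u : k} (hw : w ^ 2 = algebraMap k K u) :
    w ∈ Set.range (algebraMap k K) ∨ i * w ∈ Set.range (algebraMap k K) := by
  have : FiniteDimensional k K := IsCyclotomicExtension.finite_of_singleton 4 k K
  have : IsGalois k K := IsCyclotomicExtension.isGalois {4} k K
  have hi2 : i ^ 2 = algebraMap k K (-1) := by
    rw [(hi.pow four_pos (b := 2) rfl).eq_neg_one_of_two_right, map_neg, map_one]
  have hineg {τ : Gal(K/k)} (hτ : τ ≠ 1) : τ i = -i :=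
    (apply_eq_self_or_eq_neg_of_sq_eq hi2 τ).resolve_left fun h ↦
      hτ (algEquiv_eq_of_apply_eq_of_isPrimitiveRoot hi h)
  simp only [IsGalois.mem_range_algebraMap_iff_fixed]
  refine or_iff_not_imp_left.mpr fun hfix τ ↦ ?_
  obtain ⟨σ, hσ⟩ := not_forall.mp hfix
  have hσ1 : σ ≠ 1 := by
    rintro rfl
    exact hσ rfl
  rcases eq_or_ne τ 1 with rfl | hτ
  · rfl
  · obtain rfl : τ = σ :=
      algEquiv_eq_of_apply_eq_of_isPrimitiveRoot hi (by rw [hineg hτ, hineg hσ1])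
    rw [map_mul, hineg hτ, (apply_eq_self_or_eq_neg_of_sq_eq hw τ).resolve_left hσ, neg_mul_neg]

theorem exists_pow_four_eq_sq_of_pow_eq_algebraMap [IsCyclotomicExtension {4} k K] {u : k} {y : K}
    (hy : y ^ 4 = algebraMap k K (u ^ 2)) : ∃ z : k, z ^ 4 = u ^ 2 := by
  have hi := IsCyclotomicExtension.zeta_spec 4 k K
  obtain ⟨w, hw⟩ := exists_sq_eq_of_pow_four_eq_sq hi (hy.trans (map_pow _ _ _))
  have hw4 : w ^ 4 = algebraMap k K (u ^ 2) := by rw [map_pow, ← hw, ← pow_mul]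
  rcases mem_range_or_mul_mem_range_of_sq_eq hi hw with ⟨z, hz⟩ | ⟨z, hz⟩ <;>
    refine ⟨z, (algebraMap k K).injective ?_⟩
  · rw [map_pow, hz, hw4]
  · rw [map_pow, hz, mul_pow, hi.pow_eq_one, one_mul, hw4]

end CyclicDescent

section Completion

theorem valuation_pow_sub_pow_le {R Γ₀ : Type*} [CommRing R] [LinearOrderedCommMonoidWithZero Γ₀]
    (v : Valuation R Γ₀) {a b : R} (ha : v a ≤ 1) (hb : v b ≤ 1) (n : ℕ) :
    v (a ^ n - b ^ n) ≤ v (a - b) := by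
  rw [← (Commute.all a b).mul_geom_sum₂, map_mul]
  refine mul_le_of_le_one_right' (Valuation.map_sum_le _ fun i _ ↦ ?_)
  rw [map_mul, map_pow, map_pow]
  exact mul_le_one' (pow_le_one' ha _) (pow_le_one' hb _)

variable {R : Type*} [CommRing R] [IsDedekindDomain R] (K : Type*) [Field K] [Algebra R K]
  [IsFractionRing R K] (v : HeightOneSpectrum R)

theorem exists_valued_algebraMap_sub_lt_one {y : v.adicCompletion K} (hy : Valued.v y ≤ 1) :
    ∃ a : R, Valued.v (algebraMap K (v.adicCompletion K) (algebraMap R K a) - y) < 1 := by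
  have hval (z : K) : Valued.v (algebraMap K (v.adicCompletion K) z) = v.valuation K z :=
    HeightOneSpectrum.valuedAdicCompletion_eq_valuation' v z
  obtain ⟨b, hb⟩ : ∃ b : K, Valued.v (algebraMap K (v.adicCompletion K) b - y) < 1 := by
    have hopen : IsOpen {z : v.adicCompletion K | Valued.v (z - y) < 1} := by
      simpa using (Valued.isOpen_ball (v.adicCompletion K) 1).preimage (continuous_sub_right y)
    exact (HeightOneSpectrum.denseRange_algebraMap K v).exists_mem_open hopen ⟨y, by simp⟩
  have hb1 : v.valuation K b ≤ 1 := by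
    rw [← hval, ← sub_add_cancel (algebraMap K (v.adicCompletion K) b) y]
    exact Valuation.map_add_le _ hb.le hy
  obtain ⟨a, ha⟩ := v.exists_valuation_sub_lt_of_integer hb1 1
  refine ⟨a, ?_⟩
  rw [← sub_add_sub_cancel _ (algebraMap K (v.adicCompletion K) b) y]
  refine Valuation.map_add_lt _ ?_ hb
  rwa [← map_sub, hval]

theorem exists_pow_sub_mem_of_pow_eq {m : ℕ} (hm : m ≠ 0) {x : R} {y : v.adicCompletion K}
    (hy : y ^ m = algebraMap K (v.adicCompletion K) (algebraMap R K x)) :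
    ∃ a : R, a ^ m - x ∈ v.asIdeal := by
  have hval (z : R) : Valued.v (algebraMap K (v.adicCompletion K) (algebraMap R K z)) =
      v.valuation K (algebraMap R K z) :=
    HeightOneSpectrum.valuedAdicCompletion_eq_valuation' v _
  have hval1 (z : R) : Valued.v (algebraMap K (v.adicCompletion K) (algebraMap R K z)) ≤ 1 :=
    hval z ▸ v.valuation_le_one z
  have hy1 : Valued.v y ≤ 1 := (pow_le_one_iff hm).mp (by rw [← map_pow, hy]; exact hval1 x)
  obtain ⟨a, ha⟩ := exists_valued_algebraMap_sub_lt_one K v hy1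
  refine ⟨a, (v.valuation_lt_one_iff_mem (K := K) _).mp ?_⟩
  rw [← hval, map_sub, map_sub, ← hy, map_pow, map_pow]
  exact (valuation_pow_sub_pow_le _ (hval1 a) hy1 m).trans_lt ha

end Completion

namespace IsPowModAlmostAll

theorem of_forall_adicCompletion {R : Type*} [CommRing R] [IsDedekindDomain R] (K : Type*)
    [Field K] [Algebra R K] [IsFractionRing R K] {m : ℕ} (hm : m ≠ 0) {x : R}
    (h : {v : HeightOneSpectrum R | ¬ ∃ y : v.adicCompletion K,
      y ^ m = algebraMap K (v.adicCompletion K) (algebraMap R K x)}.Finite) :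
    IsPowModAlmostAll m x :=
  h.subset fun v hv ⟨_, hy⟩ ↦ hv (exists_pow_sub_mem_of_pow_eq K v hm hy)

variable {k : Type*} [Field k] [NumberField k] {x : 𝓞 k}

theorem exists_pow_eq_algebraMap {K : Type*} [Field K] [NumberField K] [Algebra k K] {m : ℕ}
    [NeZero m] {ζ : K} (hζ : IsPrimitiveRoot ζ m) (h : IsPowModAlmostAll m x) :
    ∃ y : K, y ^ m = algebraMap k K x :=
  (h.map_algebraMap (𝓞 K)).exists_pow_eq_of_isPrimitiveRoot hζ

theorem exists_pow_eq_of_odd_prime_pow {p r : ℕ} (hp : p.Prime) (hp2 : p ≠ 2)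
    (h : IsPowModAlmostAll (p ^ r) x) : ∃ y : k, y ^ p ^ r = x := by
  have : NeZero (p ^ r) := ⟨pow_ne_zero r hp.ne_zero⟩
  let K := CyclotomicField (p ^ r) k
  have : NumberField K := IsCyclotomicExtension.numberField {p ^ r} k K
  obtain ⟨y, hy⟩ := h.exists_pow_eq_algebraMap (IsCyclotomicExtension.zeta_spec (p ^ r) k K)
  exact exists_pow_eq_of_pow_eq_algebraMap_of_odd_prime_pow hp hp2 hy

theorem exists_sq_eq (h : IsPowModAlmostAll 2 x) : ∃ y : k, y ^ 2 = x :=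
  h.exists_pow_eq_of_isPrimitiveRoot (.neg_one 0 (by norm_num))

theorem exists_pow_four_eq (h : IsPowModAlmostAll 4 x) : ∃ y : k, y ^ 4 = x := by
  obtain ⟨u, hu⟩ := (h.of_dvd (by norm_num : 2 ∣ 4)).exists_sq_eq
  let K := CyclotomicField 4 k
  have : NumberField K := IsCyclotomicExtension.numberField {4} k K
  obtain ⟨y, hy⟩ := h.exists_pow_eq_algebraMap (IsCyclotomicExtension.zeta_spec 4 k K)
  rw [← hu] at hy ⊢
  exact exists_pow_four_eq_sq_of_pow_eq_algebraMap hy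

theorem exists_pow_eq {m : ℕ} (h8 : ¬ 8 ∣ m) (h : IsPowModAlmostAll m x) :
    ∃ y : k, y ^ m = x := by
  induction m using Nat.recOnPosPrimePosCoprime with
  | zero => exact absurd (dvd_zero 8) h8
  | one => exact ⟨x, pow_one _⟩
  | prime_pow p n hp hn =>
    rcases eq_or_ne p 2 with rfl | hp2
    · have hn3 : n < 3 := by
        by_contra! hle
        exact h8 (pow_dvd_pow 2 hle)
      interval_cases n
      · exact h.exists_sq_eq
      · exact h.exists_pow_four_eq
    · exact h.exists_pow_eq_of_odd_prime_pow hp hp2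
  | coprime a b _ _ hab iha ihb =>
    obtain ⟨y, hy⟩ := iha (fun h ↦ h8 (h.mul_right b)) (h.of_dvd (dvd_mul_right a b))
    obtain ⟨z, hz⟩ := ihb (fun h ↦ h8 (h.mul_left a)) (h.of_dvd (dvd_mul_left b a))
    obtain ⟨c, rfl, -⟩ := (pow_eq_pow_iff_of_coprime hab).mp (hy.trans hz.symm)
    exact ⟨c, by rw [← hy, ← pow_mul, mul_comm]⟩

end IsPowModAlmostAll

theorem exists_algebraMap_eq_mul_pow (R : Type*) [CommRing R] [IsDomain R] {K : Type*} [Field K]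
    [Algebra R K] [IsFractionRing R K] {m : ℕ} (hm : m ≠ 0) (x : K) :
    ∃ X : R, ∃ d : K, d ≠ 0 ∧ algebraMap R K X = x * d ^ m := by
  obtain ⟨n, d, hd, rfl⟩ := IsFractionRing.div_surjective (A := R) x
  have hd0 : algebraMap R K d ≠ 0 := by simpa using nonZeroDivisors.ne_zero hd
  refine ⟨n * d ^ (m - 1), algebraMap R K d, hd0, ?_⟩
  rw [map_mul, map_pow, ← mul_pow_sub_one hm (algebraMap R K d), ← mul_assoc,
    div_mul_cancel₀ _ hd0]

/-- The non-exceptional case of the Grunwald–Wang theorem: let `k` be a number field,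
`m` a positive integer not divisible by `8`, and `x ∈ k`. If for all but finitely many
finite places `v` of `k` the image of `x` in the completion `k_v` is an `m`-th power,
then `x` is an `m`-th power in `k`. -/
theorem grunwald_wang_non_exceptional
    (k : Type*) [Field k] [NumberField k] (m : ℕ) (hm : 0 < m) (h8 : ¬ (8 ∣ m)) (x : k)
    (hloc : {v : HeightOneSpectrum (NumberField.RingOfIntegers k) |
        ¬ ∃ y : v.adicCompletion k,
          y ^ m = algebraMap k (v.adicCompletion k) x}.Finite) :
    ∃ y : k, y ^ m = x := by
  obtain ⟨X, d, hd, hX⟩ := exists_algebraMap_eq_mul_pow (𝓞 k) hm.ne' x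
  have hmod : IsPowModAlmostAll m X := by
    refine .of_forall_adicCompletion k hm.ne' (hloc.subset fun v hv ⟨y, hy⟩ ↦ hv ?_)
    exact ⟨y * algebraMap k (v.adicCompletion k) d, by
      rw [hX, mul_pow, hy, map_mul, map_pow]⟩
  obtain ⟨y, hy⟩ := hmod.exists_pow_eq h8
  exact ⟨y / d, by rw [div_pow, hy, div_eq_iff (pow_ne_zero m hd), ← hX]⟩
end

section
/- The equation x^8 = 16 has a solution in the p-adic field ℚ_p for every prime p ≠ 2, but it has no solution in ℚ_2 and no solution in ℚ. -/
/-!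
Since `x ^ 8 - 16 = (x ^ 2 - 2) (x ^ 2 + 2) (x ^ 4 + 4)` and `(1 + √-1) ^ 4 = -4`, the equation
`x ^ 8 = 16` is solvable as soon as one of `2`, `-1`, `-2` is a square. In a finite field a product
of two nonsquares is a square, so this is always the case; for odd `p` a solution modulo `p` lifts
to `ℤ_[p]` by Hensel's lemma. In `ℚ_[2]`, and hence in its subfield `ℚ`, a solution would give
`8 ∣ 4` on taking valuations.
-/

open Polynomial IsLocalRing

theorem exists_pow_eight_eq_sixteen_of_isSquare {R : Type*} [CommRing R]
    (h : IsSquare (2 : R) ∨ IsSquare (-1 : R) ∨ IsSquare (-2 : R)) : ∃ x : R, x ^ 8 = 16 := by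
  rcases h with ⟨y, hy⟩ | ⟨i, hi⟩ | ⟨y, hy⟩
  · exact ⟨y, by linear_combination -(y ^ 6 + 2 * y ^ 4 + 4 * y ^ 2 + 8) * hy⟩
  · have hsq : (1 + i) ^ 2 = 2 * i := by linear_combination -hi
    refine ⟨1 + i, ?_⟩
    calc (1 + i) ^ 8 = ((1 + i) ^ 2) ^ 4 := by ring
      _ = 16 * (i * i) ^ 2 := by rw [hsq]; ring
      _ = 16 := by rw [← hi]; ring
  · exact ⟨y, by linear_combination -(y ^ 6 - 2 * y ^ 4 + 4 * y ^ 2 - 8) * hy⟩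

theorem isSquare_or_isSquare_or_isSquare_mul_of_finite {F : Type*} [Field F] [Finite F] (a b : F) :
    IsSquare a ∨ IsSquare b ∨ IsSquare (a * b) := by
  classical
  have := Fintype.ofFinite F
  by_contra! ⟨ha, hb, hab⟩
  rw [← quadraticChar_neg_one_iff_not_isSquare] at ha hb hab
  rw [map_mul, ha, hb] at hab
  norm_num at hab

theorem exists_pow_eight_eq_sixteen_of_finite (F : Type*) [Field F] [Finite F] :
    ∃ x : F, x ^ 8 = 16 := by
  apply exists_pow_eight_eq_sixteen_of_isSquare
  simpa using isSquare_or_isSquare_or_isSquare_mul_of_finite (2 : F) (-1)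

theorem exists_pow_eq_of_residue_pow_eq {R : Type*} [CommRing R] [HenselianLocalRing R] {n : ℕ}
    (hn : IsUnit (n : R)) {a : R} (ha : IsUnit a) {y : ResidueField R}
    (hy : y ^ n = residue R a) : ∃ x : R, x ^ n = a := by
  obtain ⟨b, rfl⟩ := residue_surjective y
  have hn0 : n ≠ 0 := by rintro rfl; simp at hn
  have hb : IsUnit b := by
    have hbn : IsUnit (residue R b ^ n) := hy ▸ ha.map (residue R)
    exact (isUnit_map_iff (residue R) b).mp ((isUnit_pow_iff hn0).mp hbn)
  have hroot : (X ^ n - C a).eval b ∈ maximalIdeal R := by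
    rw [← residue_eq_zero_iff]
    simp [hy]
  have hderiv : IsUnit ((X ^ n - C a).derivative.eval b) := by
    simpa [derivative_X_pow] using hn.mul (hb.pow (n - 1))
  obtain ⟨x, hx, -⟩ :=
    HenselianLocalRing.is_henselian _ (monic_X_pow_sub_C a hn0) b hroot hderiv
  exact ⟨x, by simpa [sub_eq_zero] using hx⟩

theorem exists_pow_eight_eq_sixteen_of_henselian {R : Type*} [CommRing R] [HenselianLocalRing R]
    [Finite (ResidueField R)] (h2 : IsUnit (2 : R)) : ∃ x : R, x ^ 8 = 16 := by
  have h8 : IsUnit ((8 : ℕ) : R) := by convert h2.pow 3; norm_num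
  have h16 : IsUnit (16 : R) := by convert h2.pow 4; norm_num
  obtain ⟨y, hy⟩ := exists_pow_eight_eq_sixteen_of_finite (ResidueField R)
  exact exists_pow_eq_of_residue_pow_eq h8 h16 (by rw [hy, map_ofNat])

theorem henselianLocalRing_of_isAdicComplete (R : Type*) [CommRing R] [IsLocalRing R]
    [IsAdicComplete (maximalIdeal R) R] : HenselianLocalRing R where
  is_henselian f hf a ha hda :=
    HenselianRing.is_henselian f hf a ha (hda.map (Ideal.Quotient.mk (maximalIdeal R)))

instance padicInt_henselianLocalRing (p : ℕ) [Fact p.Prime] : HenselianLocalRing ℤ_[p] :=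
  henselianLocalRing_of_isAdicComplete ℤ_[p]

theorem padicInt_isUnit_natCast_iff {p : ℕ} [Fact p.Prime] {n : ℕ} :
    IsUnit (n : ℤ_[p]) ↔ p.Coprime n := by
  rw [PadicInt.isUnit_iff, PadicInt.norm_def, PadicInt.coe_natCast, Padic.norm_natCast_eq_one_iff]

theorem exists_padicInt_pow_eight_eq_sixteen {p : ℕ} [Fact p.Prime] (hp : p ≠ 2) :
    ∃ x : ℤ_[p], x ^ 8 = 16 := by
  have : Finite (ResidueField ℤ_[p]) := Finite.of_equiv _ PadicInt.residueField.symm.toEquiv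
  have hcoprime : p.Coprime 2 := (Nat.coprime_primes Fact.out Nat.prime_two).mpr hp
  exact exists_pow_eight_eq_sixteen_of_henselian
    (by exact_mod_cast padicInt_isUnit_natCast_iff.mpr hcoprime)

theorem dvd_of_padic_pow_eq_prime_pow {p : ℕ} [Fact p.Prime] {x : ℚ_[p]} {m n : ℕ}
    (h : x ^ n = (p : ℚ_[p]) ^ m) : n ∣ m := by
  have hval : (n : ℤ) * x.valuation = m := by
    simpa using congrArg Padic.valuation h
  exact Int.natCast_dvd_natCast.mp ⟨x.valuation, hval.symm⟩

theorem padic_two_pow_eight_ne_sixteen (x : ℚ_[2]) : x ^ 8 ≠ 16 := by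
  intro hx
  have h : x ^ 8 = ((2 : ℕ) : ℚ_[2]) ^ 4 := by rw [hx]; norm_num
  exact absurd (dvd_of_padic_pow_eq_prime_pow h) (by norm_num)

/-- Trost (1948): the equation `x^8 = 16` has a solution in the `p`-adic field `ℚ_p`
for every prime `p ≠ 2`, but it has no solution in `ℚ_2` and no solution in `ℚ`. -/
theorem trost_x_pow_eight_eq_sixteen :
    (∀ (p : ℕ) [Fact p.Prime], p ≠ 2 → ∃ x : ℚ_[p], x ^ 8 = 16) ∧
    (¬ ∃ x : ℚ_[2], x ^ 8 = 16) ∧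
    (¬ ∃ x : ℚ, x ^ 8 = 16) := by
  refine ⟨fun p _ hp => ?_, fun ⟨x, hx⟩ => padic_two_pow_eight_ne_sixteen x hx, fun ⟨x, hx⟩ =>
    padic_two_pow_eight_ne_sixteen x (by exact_mod_cast congrArg ((↑) : ℚ → ℚ_[2]) hx)⟩
  obtain ⟨z, hz⟩ := exists_padicInt_pow_eight_eq_sixteen hp
  exact ⟨z, by exact_mod_cast congrArg ((↑) : ℤ_[p] → ℚ_[p]) hz⟩
end

section
/- Let p be an odd prime and let n ≥ 3(p−1). There exists a finite subgroup G of SL_n(ℤ) that is a p-group, together with a 1-cocycle Z : G → (ℤ/pℤ)^n for the action of G on (ℤ/pℤ)^n obtained by reducing matrix entries modulo p, such that for every σ ∈ G there exists A_σ ∈ (ℤ/pℤ)^n with Z(σ) = σ·A_σ − A_σ, but there is no W ∈ (ℤ/pℤ)^n with Z(σ) = σ·W − W for all σ ∈ G. Equivalently, the restriction map H^1(G, 𝔽_p^n) → ∏_C H^1(C, 𝔽_p^n), the product being over all cyclic subgroups C of G, is not injective. -/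
/-- The action of `SL_n(ℤ)` on `(ℤ/pℤ)^n` obtained by reducing matrix entries modulo `p`
and applying the resulting matrix to a vector. -/
def SLnZModAct (p n : ℕ) (σ : Matrix.SpecialLinearGroup (Fin n) ℤ)
    (v : Fin n → ZMod p) : Fin n → ZMod p :=
  ((Matrix.SpecialLinearGroup.map (Int.castRingHom (ZMod p)) σ :
      Matrix.SpecialLinearGroup (Fin n) (ZMod p)) : Matrix (Fin n) (Fin n) (ZMod p)).mulVec v

/-!
Let `O = ℤ[ζ]` with `ζ` a primitive `p`-th root of unity and let `a = ζ - 1`, so that `p = a²c` as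
`p` is odd. In `O³` consider the order `R` of triples congruent modulo `a`. The group `μ_p × μ_p`
acts on `R` through multiplication by `(u, v, uv) ∈ R`, and `Z(u, v) = (0, 0, ac(u - 1))` is a
cocycle modulo `pR`. At a single element with `uv ≠ 1` it is the coboundary of
`(0, 0, ac(u - 1) / (uv - 1))`; if `uv = 1` it is the coboundary of `(-ac, acu, 0)`, up to an
element of `p • R`. If it were globally the coboundary of `w`, then at `(u, 1)` and at `(1, u)` one
of the first two coordinates of the error term in `p • R` would vanish, so that its third coordinate
would lie in `pa`. These two third coordinates differ by `ac(u - 1)`, which generates `(p)`, so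
`a` would be a unit. Adding trivial summands `ℤ` raises the rank from `3(p - 1)` to `n`, and
the determinants are `1` because `-1` is not a `p`-power root of unity.
-/

open NumberField

lemma monoidHom_prod_injective {M N P : Type*} [MulOneClass M] [MulOneClass N] [MulOneClass P]
    {f : M →* N} (hf : Function.Injective f) (g : M →* P) : Function.Injective (f.prod g) :=
  .of_comp (f := Prod.fst) hf

section Reduction

variable {ι M : Type*} [Finite ι] [AddCommGroup M]

/-- The coordinates modulo `p` of an element of a lattice: reduction `M → M / pM`, with the target
identified with `(ℤ/pℤ)^ι` by a basis of `M`. -/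
noncomputable def reduceCoords (p : ℕ) (B : Module.Basis ι ℤ M) : M →+ (ι → ZMod p) :=
  ((Int.castAddHom (ZMod p)).compLeft ι).comp B.equivFun.toAddMonoidHom

lemma reduceCoords_apply (p : ℕ) (B : Module.Basis ι ℤ M) (x : M) (i : ι) :
    reduceCoords p B x i = (B.repr x i : ZMod p) :=
  rfl

lemma reduceCoords_surjective (p : ℕ) (B : Module.Basis ι ℤ M) :
    Function.Surjective (reduceCoords p B) :=
  (ZMod.intCast_surjective.comp_left).comp B.equivFun.surjective

lemma reduceCoords_eq_zero_iff {p : ℕ} {R : Type*} [CommRing R] (B : Module.Basis ι ℤ R) {x : R} :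
    reduceCoords p B x = 0 ↔ (p : R) ∣ x := by
  constructor
  · intro hx
    choose c hc using fun i => (ZMod.intCast_zmod_eq_zero_iff_dvd _ p).1 (congrFun hx i)
    refine ⟨B.equivFun.symm c, B.equivFun.injective (funext fun i => ?_)⟩
    rw [← nsmul_eq_mul, map_nsmul, LinearEquiv.apply_symm_apply]
    simpa using hc i
  · rintro ⟨y, rfl⟩
    ext i
    rw [← nsmul_eq_mul, map_nsmul]
    simp

lemma SLnZModAct_reduceCoords {p n : ℕ} {R : Type*} [CommRing R] (B : Module.Basis (Fin n) ℤ R)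
    {σ : Matrix.SpecialLinearGroup (Fin n) ℤ} {a : R}
    (hσ : (σ : Matrix (Fin n) (Fin n) ℤ) = Algebra.leftMulMatrix B a) (x : R) :
    SLnZModAct p n σ (reduceCoords p B x) = reduceCoords p B (a * x) := by
  ext i
  have hrepr : B.repr (a * x) i = (σ : Matrix (Fin n) (Fin n) ℤ).mulVec (B.repr x) i := by
    rw [hσ, Algebra.leftMulMatrix_mulVec_repr]
  rw [reduceCoords_apply, hrepr]
  exact (RingHom.map_mulVec (Int.castRingHom (ZMod p)) _ _ i).symm

end Reduction

section RegularRepresentation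

variable {p n : ℕ} {Γ R : Type*} [Group Γ] [CommRing R]

lemma monoidHom_int_apply_eq_one_of_isPGroup (hp : Odd p) (hΓ : IsPGroup p Γ) (f : Γ →* ℤ)
    (g : Γ) : f g = 1 := by
  obtain ⟨k, hk⟩ := isPGroup_iff_pow_pow_eq_one.1 hΓ g
  have hpow : f g ^ p ^ k = 1 ^ p ^ k := by rw [← map_pow, hk, map_one, one_pow]
  exact hp.pow.pow_injective hpow

lemma det_leftMulMatrix_eq_one_of_isPGroup (hp : Odd p) (hΓ : IsPGroup p Γ) (φ : Γ →* R)
    (B : Module.Basis (Fin n) ℤ R) (g : Γ) : (Algebra.leftMulMatrix B (φ g)).det = 1 := by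
  rw [← Algebra.norm_eq_matrix_det]
  exact monoidHom_int_apply_eq_one_of_isPGroup hp hΓ ((Algebra.norm ℤ).comp φ) g

/-- The regular representation of a `p`-group `Γ` acting on a lattice `R` through multiplication
by elements of the ring `R`. It lands in `SL_n(ℤ)` because `p` is odd. -/
noncomputable def regularRep (hp : Odd p) (hΓ : IsPGroup p Γ) (φ : Γ →* R)
    (B : Module.Basis (Fin n) ℤ R) : Γ →* Matrix.SpecialLinearGroup (Fin n) ℤ where
  toFun g := ⟨Algebra.leftMulMatrix B (φ g), det_leftMulMatrix_eq_one_of_isPGroup hp hΓ φ B g⟩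
  map_one' := Subtype.ext <| (congrArg _ (map_one φ)).trans (map_one _)
  map_mul' g h := Subtype.ext <| (congrArg _ (map_mul φ g h)).trans (map_mul _ _ _)

lemma regularRep_injective (hp : Odd p) (hΓ : IsPGroup p Γ) {φ : Γ →* R}
    (hφ : Function.Injective φ) (B : Module.Basis (Fin n) ℤ R) :
    Function.Injective (regularRep hp hΓ φ B) := fun _ _ hgh =>
  hφ (Algebra.leftMulMatrix_injective B (congrArg Subtype.val hgh))

end RegularRepresentation

/-- Let `Γ` act on a ring `R` by multiplication through `φ : Γ →* R`. The map `Z : Γ → R`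
represents modulo `m` a 1-cocycle with values in `R / mR` which is a coboundary on every cyclic
subgroup of `Γ` but not on `Γ`. Congruences modulo `m` are written as divisibilities. -/
structure IsNontrivialLocalCocycle {Γ R : Type*} [Group Γ] [CommRing R] (m : R) (φ : Γ →* R)
    (Z : Γ → R) : Prop where
  cocycle : ∀ g h, m ∣ Z (g * h) - (Z g + φ g * Z h)
  locally_trivial : ∀ g, ∃ a, m ∣ Z g - (φ g * a - a)
  not_coboundary : ¬ ∃ w, ∀ g, m ∣ Z g - (φ g * w - w)

namespace IsNontrivialLocalCocycle

variable {Γ R : Type*} [Group Γ] [CommRing R] {φ : Γ →* R} {Z : Γ → R}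

lemma prod_one {m : ℕ} (hZ : IsNontrivialLocalCocycle (m : R) φ Z) (S : Type*) [CommRing S] :
    IsNontrivialLocalCocycle (m : R × S) (φ.prod (1 : Γ →* S)) (fun g => (Z g, 0)) where
  cocycle g h := prod_dvd_iff.2 ⟨by simpa using hZ.cocycle g h, by simp⟩
  locally_trivial g := by
    obtain ⟨a, ha⟩ := hZ.locally_trivial g
    exact ⟨(a, 0), prod_dvd_iff.2 ⟨by simpa using ha, by simp⟩⟩
  not_coboundary := by
    rintro ⟨w, hw⟩
    exact hZ.not_coboundary ⟨w.1, fun g => by simpa using (prod_dvd_iff.1 (hw g)).1⟩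

lemma exists_subgroup_specialLinearGroup [Finite Γ] {p n : ℕ}
    (hZ : IsNontrivialLocalCocycle (p : R) φ Z) (hφ : Function.Injective φ) (hp : Odd p)
    (hΓ : IsPGroup p Γ) (B : Module.Basis (Fin n) ℤ R) :
    ∃ G : Subgroup (Matrix.SpecialLinearGroup (Fin n) ℤ), Finite G ∧ IsPGroup p G ∧
      ∃ Z' : G → (Fin n → ZMod p),
        (∀ σ τ, Z' (σ * τ) = Z' σ + SLnZModAct p n σ (Z' τ)) ∧
        (∀ σ, ∃ A, Z' σ = SLnZModAct p n σ A - A) ∧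
        ¬ ∃ W, ∀ σ, Z' σ = SLnZModAct p n σ W - W := by
  let r := reduceCoords p B
  let ρ := regularRep hp hΓ φ B
  let e := ρ.ofInjective (regularRep_injective hp hΓ hφ B)
  have hr {x y : R} : r x = r y ↔ (p : R) ∣ x - y := by
    rw [← sub_eq_zero, ← map_sub, reduceCoords_eq_zero_iff]
  have hact (g : Γ) (x : R) : SLnZModAct p n (e g) (r x) = r (φ g * x) :=
    SLnZModAct_reduceCoords B rfl x
  have hcob (g : Γ) (a : R) :
      r (Z g) = SLnZModAct p n (e g) (r a) - r a ↔ (p : R) ∣ Z g - (φ g * a - a) := by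
    rw [hact, ← map_sub, hr]
  refine ⟨ρ.range, .of_equiv Γ e.toEquiv, hΓ.of_equiv e, fun σ => r (Z (e.symm σ)), ?_, ?_, ?_⟩
  · refine e.surjective.forall₂.2 fun g h => ?_
    simp only [← map_mul, e.symm_apply_apply, hact, ← map_add]
    exact hr.2 (hZ.cocycle g h)
  · refine e.surjective.forall.2 fun g => ?_
    obtain ⟨a, ha⟩ := hZ.locally_trivial g
    exact ⟨r a, by simpa only [e.symm_apply_apply] using (hcob g a).2 ha⟩
  · rintro ⟨W, hW⟩
    obtain ⟨w, rfl⟩ := reduceCoords_surjective p B W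
    refine hZ.not_coboundary ⟨w, fun g => (hcob g w).1 ?_⟩
    simpa only [e.symm_apply_apply] using hW (e g)

end IsNontrivialLocalCocycle

section CongruentTuples

variable {R : Type*} [CommRing R]

/-- The order in `R^ι` of all tuples whose entries are congruent to one another modulo `a`. -/
def congruentTuples (ι : Type*) (a : R) : Subalgebra R (ι → R) where
  carrier := {x | ∀ i j, a ∣ x i - x j}
  mul_mem' hx hy i j := dvd_mul_sub_mul (hx i j) (hy i j)
  add_mem' {x y} hx hy i j := by
    simpa only [Pi.add_apply, add_sub_add_comm] using dvd_add (hx i j) (hy i j)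
  algebraMap_mem' r i j := by simp

namespace congruentTuples

variable {ι : Type*} {a : R}

lemma mem_of_forall_dvd_sub {x : ι → R} (r : R) (hx : ∀ i, a ∣ x i - r) :
    x ∈ congruentTuples ι a := fun i j => by
  simpa only [sub_sub_sub_cancel_right] using dvd_sub (hx i) (hx j)

lemma algebraMap_dvd_iff_fin_three {m : R} {x : congruentTuples (Fin 3) a} :
    algebraMap R _ m ∣ x ↔ ∃ y : congruentTuples (Fin 3) a,
      x.1 0 = m * y.1 0 ∧ x.1 1 = m * y.1 1 ∧ x.1 2 = m * y.1 2 := by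
  refine exists_congr fun y => ?_
  rw [Subtype.ext_iff, funext_iff, Fin.forall_fin_succ, Fin.forall_fin_succ, Fin.forall_fin_succ]
  simp

variable (ι a) in
/-- Multiplication by `a` as a map from the maximal order `R^ι` to `congruentTuples ι a`. -/
def scale : (ι → R) →ₗ[R] congruentTuples ι a :=
  LinearMap.codRestrict (Subalgebra.toSubmodule (congruentTuples ι a)) (a • LinearMap.id)
    fun x => mem_of_forall_dvd_sub 0 fun i => by simp

lemma coe_scale (x : ι → R) : (scale ι a x : ι → R) = a • x :=
  rfl

lemma scale_injective [IsDomain R] (ha : a ≠ 0) : Function.Injective (scale ι a) :=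
  fun _ _ hxy => smul_right_injective _ ha (congrArg Subtype.val hxy)

lemma restrictScalars_val_injective :
    Function.Injective ((congruentTuples ι a).val.toLinearMap.restrictScalars ℤ) :=
  Subtype.val_injective

instance [Finite ι] [Module.Finite ℤ R] : Module.Finite ℤ (congruentTuples ι a) :=
  Module.Finite.of_injective _ restrictScalars_val_injective

instance [Finite ι] [Module.Free ℤ R] [Module.Finite ℤ R] :
    Module.Free ℤ (congruentTuples ι a) :=
  Module.Free.of_equiv (LinearEquiv.ofInjective
    ((congruentTuples ι a).val.toLinearMap.restrictScalars ℤ) restrictScalars_val_injective).symm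

lemma finrank_eq [Fintype ι] [IsDomain R] [Module.Free ℤ R] [Module.Finite ℤ R] (ha : a ≠ 0) :
    Module.finrank ℤ (congruentTuples ι a) = Fintype.card ι * Module.finrank ℤ R := by
  rw [← smul_eq_mul, ← Finset.card_univ, ← Finset.sum_const, ← Module.finrank_pi_fintype]
  exact le_antisymm
    (LinearMap.finrank_le_finrank_of_injective restrictScalars_val_injective)
    (LinearMap.finrank_le_finrank_of_injective (f := (scale ι a).restrictScalars ℤ)
      (scale_injective ha))

end congruentTuples

end CongruentTuples

section DiagonalCocycle

variable {R H : Type*} [CommRing R] [Group H] {a : R} (χ : H →* R)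

/-- The action of `H × H` on triples through the characters `χ₁`, `χ₂` and `χ₁χ₂`, where `χᵢ` is
`χ` on the `i`-th factor. -/
def diagonalRep (hdvd : ∀ u, a ∣ χ u - 1) : H × H →* congruentTuples (Fin 3) a where
  toFun g := ⟨![χ g.1, χ g.2, χ g.1 * χ g.2], congruentTuples.mem_of_forall_dvd_sub 1 <| by
    simpa [Fin.forall_fin_succ, hdvd] using dvd_mul_sub_mul (hdvd g.1) (hdvd g.2)⟩
  map_one' := Subtype.ext <| by ext i; fin_cases i <;> simp
  map_mul' g h := Subtype.ext <| by ext i; fin_cases i <;> simp [mul_mul_mul_comm]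

lemma coe_diagonalRep (hdvd : ∀ u, a ∣ χ u - 1) (g : H × H) :
    (diagonalRep χ hdvd g : Fin 3 → R) = ![χ g.1, χ g.2, χ g.1 * χ g.2] :=
  rfl

lemma diagonalRep_injective (hdvd : ∀ u, a ∣ χ u - 1) (hχ : Function.Injective χ) :
    Function.Injective (diagonalRep χ hdvd) := fun _ _ hgh =>
  Prod.ext (hχ (congrFun (congrArg Subtype.val hgh) 0))
    (hχ (congrFun (congrArg Subtype.val hgh) 1))

variable (a) in
/-- The cocycle `(u, v) ↦ (0, 0, ac(χ u - 1))`. Modulo `a²c` it is the coboundary of `(0, 0, ac)`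
up to elements of `a²c • R³`, which need not vanish modulo `a²c` in `congruentTuples`. -/
def diagonalCocycle (c : R) (g : H × H) : congruentTuples (Fin 3) a :=
  congruentTuples.scale (Fin 3) a ![0, 0, c * (χ g.1 - 1)]

lemma coe_diagonalCocycle (c : R) (g : H × H) :
    (diagonalCocycle a χ c g : Fin 3 → R) = ![0, 0, a * c * (χ g.1 - 1)] := by
  simp [diagonalCocycle, congruentTuples.coe_scale, mul_assoc]

lemma diagonalCocycle_cocycle (hdvd : ∀ u, a ∣ χ u - 1) (c : R) (g h : H × H) :
    algebraMap R _ (a ^ 2 * c) ∣ diagonalCocycle a χ c (g * h) -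
      (diagonalCocycle a χ c g + diagonalRep χ hdvd g * diagonalCocycle a χ c h) := by
  obtain ⟨s, hs⟩ := hdvd g.2
  obtain ⟨t, ht⟩ := hdvd h.1
  refine congruentTuples.algebraMap_dvd_iff_fin_three.2
    ⟨congruentTuples.scale (Fin 3) a ![0, 0, -χ g.1 * s * t], ?_, ?_, ?_⟩ <;>
  simp only [AddSubgroupClass.coe_sub, AddMemClass.coe_add, MulMemClass.coe_mul, Pi.sub_apply,
    Pi.add_apply, Pi.mul_apply, Pi.smul_apply, smul_eq_mul, coe_diagonalCocycle, coe_diagonalRep,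
    congruentTuples.coe_scale, Matrix.cons_val, Prod.fst_mul, map_mul]
  · ring
  · ring
  · linear_combination -a * c * χ g.1 * (χ h.1 - 1) * hs - a ^ 2 * c * χ g.1 * s * ht

variable {χ} in
lemma dvd_diagonalCocycle_sub_iff {hdvd : ∀ u, a ∣ χ u - 1} {c m : R} {g : H × H}
    {x : congruentTuples (Fin 3) a} :
    algebraMap R _ m ∣ diagonalCocycle a χ c g - (diagonalRep χ hdvd g * x - x) ↔
      ∃ y : congruentTuples (Fin 3) a, (1 - χ g.1) * x.1 0 = m * y.1 0 ∧
        (1 - χ g.2) * x.1 1 = m * y.1 1 ∧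
        a * c * (χ g.1 - 1) + (1 - χ g.1 * χ g.2) * x.1 2 = m * y.1 2 := by
  simp only [congruentTuples.algebraMap_dvd_iff_fin_three, AddSubgroupClass.coe_sub,
    MulMemClass.coe_mul, Pi.sub_apply, Pi.mul_apply, coe_diagonalCocycle, coe_diagonalRep,
    Matrix.cons_val]
  ring_nf

lemma diagonalCocycle_locally_trivial (hdvd : ∀ u, a ∣ χ u - 1) (hχ : ∀ u ≠ 1, χ u - 1 ∣ a)
    (c : R) (g : H × H) : ∃ x, algebraMap R _ (a ^ 2 * c) ∣
      diagonalCocycle a χ c g - (diagonalRep χ hdvd g * x - x) := by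
  obtain ⟨u, v⟩ := g
  simp only [dvd_diagonalCocycle_sub_iff]
  obtain ⟨s, hs⟩ := hdvd u
  by_cases huv : u * v = 1
  · have hχuv : χ u * χ v = 1 := by rw [← map_mul, huv, map_one]
    -- The third character is trivial at `(u, v)`, so only the first two coordinates can help: they
    -- make all three coordinates of the difference equal to `a²c * s`.
    refine ⟨congruentTuples.scale (Fin 3) a ![-c, c * χ u, 0], algebraMap R _ s, ?_, ?_, ?_⟩ <;>
    simp only [congruentTuples.coe_scale, Subalgebra.coe_algebraMap, Pi.algebraMap_apply,
      Algebra.algebraMap_self_apply, Pi.smul_apply, smul_eq_mul, Matrix.cons_val]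
    · linear_combination a * c * hs
    · linear_combination a * c * hs - a * c * hχuv
    · linear_combination a * c * hs
  · obtain ⟨t, ht⟩ := hχ _ huv
    rw [map_mul] at ht
    refine ⟨congruentTuples.scale (Fin 3) a ![0, 0, c * s * t], 0, ?_, ?_, ?_⟩ <;>
    simp only [congruentTuples.coe_scale, ZeroMemClass.coe_zero, Pi.zero_apply, Pi.smul_apply,
      smul_eq_mul, Matrix.cons_val, mul_zero]
    linear_combination a * c * hs + a * c * s * ht

lemma diagonalCocycle_not_coboundary [IsDomain R] [Nontrivial H] (hdvd : ∀ u, a ∣ χ u - 1)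
    (hχ : ∀ u ≠ 1, χ u - 1 ∣ a) (ha₀ : a ≠ 0) (ha : ¬ IsUnit a) {c : R} (hc : c ≠ 0) :
    ¬ ∃ w, ∀ g, algebraMap R _ (a ^ 2 * c) ∣
      diagonalCocycle a χ c g - (diagonalRep χ hdvd g * w - w) := by
  rintro ⟨w, hw⟩
  have hm : a ^ 2 * c ≠ 0 := mul_ne_zero (pow_ne_zero 2 ha₀) hc
  obtain ⟨u, hu⟩ := exists_ne (1 : H)
  obtain ⟨r, hr⟩ := hχ u hu
  obtain ⟨y, -, hy₁, hy₂⟩ := dvd_diagonalCocycle_sub_iff.1 (hw (u, 1))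
  obtain ⟨z, hz₀, -, hz₂⟩ := dvd_diagonalCocycle_sub_iff.1 (hw (1, u))
  simp only [map_one, mul_one, one_mul, sub_self, mul_zero, zero_mul, zero_add] at hy₁ hy₂ hz₀ hz₂
  replace hy₁ : y.1 1 = 0 := (mul_eq_zero_iff_left hm).1 hy₁.symm
  replace hz₀ : z.1 0 = 0 := (mul_eq_zero_iff_left hm).1 hz₀.symm
  obtain ⟨s, hs⟩ : a ∣ y.1 2 := by simpa only [hy₁, sub_zero] using y.2 2 1
  obtain ⟨t, ht⟩ : a ∣ z.1 2 := by simpa only [hz₀, sub_zero] using z.2 2 0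
  have hcancel : a * c * (χ u - 1) = a ^ 2 * c * (a * (s - t)) := by
    linear_combination hy₂ - hz₂ + a ^ 2 * c * hs - a ^ 2 * c * ht
  refine ha (IsUnit.of_mul_eq_one (r * (s - t)) (mul_left_cancel₀ hm ?_))
  linear_combination -r * hcancel - a * c * hr

lemma isNontrivialLocalCocycle_diagonalCocycle [IsDomain R] [Nontrivial H]
    (hdvd : ∀ u, a ∣ χ u - 1) (hχ : ∀ u ≠ 1, χ u - 1 ∣ a) (ha₀ : a ≠ 0) (ha : ¬ IsUnit a) {c : R}
    (hc : c ≠ 0) :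
    IsNontrivialLocalCocycle (algebraMap R _ (a ^ 2 * c)) (diagonalRep χ hdvd)
      (diagonalCocycle a χ c) where
  cocycle := diagonalCocycle_cocycle χ hdvd c
  locally_trivial := diagonalCocycle_locally_trivial χ hdvd hχ c
  not_coboundary := diagonalCocycle_not_coboundary χ hdvd hχ ha₀ ha hc

end DiagonalCocycle

section RootsOfUnity

variable {p : ℕ} {R : Type*} [CommRing R]

variable (p R) in
/-- The tautological character of the group of `p`-th roots of unity in `R`. -/
def rootsOfUnityChar : rootsOfUnity p R →* R :=
  (Units.coeHom R).comp (rootsOfUnity p R).subtype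

lemma rootsOfUnityChar_injective : Function.Injective (rootsOfUnityChar p R) :=
  rootsOfUnity.coe_injective

lemma rootsOfUnity_pow_eq_one (u : rootsOfUnity p R) : u ^ p = 1 :=
  Subtype.ext u.2

lemma isPGroup_rootsOfUnity_prod : IsPGroup p (rootsOfUnity p R × rootsOfUnity p R) := fun g =>
  ⟨1, by rw [pow_one]; exact Prod.ext (rootsOfUnity_pow_eq_one _) (rootsOfUnity_pow_eq_one _)⟩

lemma isPrimitiveRoot_rootsOfUnityChar [Fact p.Prime] {u : rootsOfUnity p R} (hu : u ≠ 1) :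
    IsPrimitiveRoot (rootsOfUnityChar p R u) p :=
  (IsPrimitiveRoot.iff_orderOf.2 (orderOf_eq_prime (rootsOfUnity_pow_eq_one u) hu)).map_of_injective
    rootsOfUnityChar_injective

variable [IsDomain R] {ζ : R}

lemma sub_one_dvd_rootsOfUnityChar_sub_one [NeZero p] (hζ : IsPrimitiveRoot ζ p)
    (u : rootsOfUnity p R) : ζ - 1 ∣ rootsOfUnityChar p R u - 1 := by
  obtain ⟨i, -, hi⟩ := hζ.eq_pow_of_pow_eq_one
    (by rw [← map_pow, rootsOfUnity_pow_eq_one, map_one] : rootsOfUnityChar p R u ^ p = 1)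
  exact hi ▸ sub_one_dvd_pow_sub_one ζ i

lemma rootsOfUnityChar_sub_one_dvd_sub_one [Fact p.Prime] (hζ : IsPrimitiveRoot ζ p)
    (u : rootsOfUnity p R) (hu : u ≠ 1) : rootsOfUnityChar p R u - 1 ∣ ζ - 1 := by
  obtain ⟨i, -, rfl⟩ := (isPrimitiveRoot_rootsOfUnityChar hu).eq_pow_of_pow_eq_one hζ.pow_eq_one
  exact sub_one_dvd_pow_sub_one _ i

lemma isNontrivialLocalCocycle_rootsOfUnityChar [Fact p.Prime] (hζ : IsPrimitiveRoot ζ p)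
    (hunit : ¬ IsUnit (ζ - 1)) {c : R} (hc : (p : R) = (ζ - 1) ^ 2 * c) :
    IsNontrivialLocalCocycle (p : congruentTuples (Fin 3) (ζ - 1))
      (diagonalRep (rootsOfUnityChar p R) (sub_one_dvd_rootsOfUnityChar_sub_one hζ))
      (diagonalCocycle (ζ - 1) (rootsOfUnityChar p R) c) := by
  have hp : 1 < p := (Fact.out : p.Prime).one_lt
  have : Nontrivial (rootsOfUnity p R) :=
    Finite.one_lt_card_iff_nontrivial.1 (hp.trans_eq hζ.card_rootsOfUnity.symm)
  rw [← map_natCast (algebraMap R _), hc]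
  exact isNontrivialLocalCocycle_diagonalCocycle _ _ (rootsOfUnityChar_sub_one_dvd_sub_one hζ)
    (sub_ne_zero.2 (hζ.ne_one hp)) hunit
    (right_ne_zero_of_mul (hc ▸ hζ.neZero'.ne))

end RootsOfUnity

section Cyclotomic

variable (p : ℕ) [Fact p.Prime]

lemma finrank_ringOfIntegers_cyclotomicField :
    Module.finrank ℤ (𝓞 (CyclotomicField p ℚ)) = p - 1 := by
  have hp : p.Prime := Fact.out
  have : IsCyclotomicExtension {p} ℚ (CyclotomicField p ℚ) :=
    CyclotomicField.isCyclotomicExtension p ℚ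
  rw [RingOfIntegers.rank, IsCyclotomicExtension.finrank (CyclotomicField p ℚ)
    (Polynomial.cyclotomic.irreducible_rat hp.pos), Nat.totient_prime hp]

lemma exists_isPrimitiveRoot_ringOfIntegers_cyclotomicField :
    ∃ ζ : 𝓞 (CyclotomicField p ℚ), IsPrimitiveRoot ζ p ∧ Prime (ζ - 1) ∧
      Associated ((ζ - 1) ^ (p - 1)) (p : 𝓞 (CyclotomicField p ℚ)) := by
  have : IsCyclotomicExtension {p} ℚ (CyclotomicField p ℚ) :=
    CyclotomicField.isCyclotomicExtension p ℚ
  have hζ := IsCyclotomicExtension.zeta_spec p ℚ (CyclotomicField p ℚ)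
  exact ⟨hζ.toInteger, hζ.toInteger_isPrimitiveRoot, hζ.zeta_sub_one_prime',
    IsCyclotomicExtension.Rat.associated_zeta_sub_one_pow_prime p hζ⟩

end Cyclotomic

/-- Illengo (2008): for every odd prime `p` and every `n ≥ 3(p-1)` there is a finite
`p`-subgroup `G` of `SL_n(ℤ)` and a 1-cocycle `Z : G → (ℤ/pℤ)^n` (for the action of `G`
on `(ℤ/pℤ)^n` by reduction of matrix entries modulo `p`) which satisfies the local
conditions but is not a coboundary; equivalently, the restriction map
`H¹(G, 𝔽_p^n) → ∏_C H¹(C, 𝔽_p^n)` over all cyclic subgroups `C` of `G` is not injective. -/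
theorem illengo_counterexample (p : ℕ) (hp : p.Prime) (hodd : p ≠ 2)
    (n : ℕ) (hn : 3 * (p - 1) ≤ n) :
    ∃ G : Subgroup (Matrix.SpecialLinearGroup (Fin n) ℤ),
      Finite G ∧ IsPGroup p G ∧
      ∃ Z : G → (Fin n → ZMod p),
        (∀ σ τ : G, Z (σ * τ) = Z σ + SLnZModAct p n (σ : Matrix.SpecialLinearGroup (Fin n) ℤ) (Z τ)) ∧
        (∀ σ : G, ∃ A : Fin n → ZMod p,
          Z σ = SLnZModAct p n (σ : Matrix.SpecialLinearGroup (Fin n) ℤ) A - A) ∧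
        ¬ ∃ W : Fin n → ZMod p, ∀ σ : G,
          Z σ = SLnZModAct p n (σ : Matrix.SpecialLinearGroup (Fin n) ℤ) W - W := by
  have : Fact p.Prime := ⟨hp⟩
  obtain ⟨ζ, hζ, hprime, hassoc⟩ := exists_isPrimitiveRoot_ringOfIntegers_cyclotomicField p
  obtain ⟨c, hc⟩ : (ζ - 1) ^ 2 ∣ (p : 𝓞 (CyclotomicField p ℚ)) :=
    (pow_dvd_pow _ (by have := hp.two_le; grind)).trans hassoc.dvd
  let S := Fin (n - 3 * (p - 1)) → ℤ
  have hrank : Module.finrank ℤ (congruentTuples (Fin 3) (ζ - 1) × S) = n := by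
    rw [Module.finrank_prod, congruentTuples.finrank_eq hprime.ne_zero, Module.finrank_fin_fun,
      finrank_ringOfIntegers_cyclotomicField, Fintype.card_fin, Nat.add_sub_cancel' hn]
  have hZ := (isNontrivialLocalCocycle_rootsOfUnityChar hζ hprime.not_isUnit hc).prod_one S
  have hφ := monoidHom_prod_injective (diagonalRep_injective _
    (sub_one_dvd_rootsOfUnityChar_sub_one hζ) rootsOfUnityChar_injective) (1 : _ →* S)
  exact hZ.exists_subgroup_specialLinearGroup hφ (hp.odd_of_ne_two hodd)
    isPGroup_rootsOfUnity_prod (Module.finBasisOfFinrankEq ℤ _ hrank)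
end

section
/- Let x and y be positive integers such that for every positive integer n and every prime number p, p divides x^n − 1 if and only if p divides y^n − 1. Then x = y. -/
/-! For a number field `K`, the simple pole of the Dedekind zeta function at `1` says that the
number of prime ideals of norm `p` has mean value `1` over the primes `p`, in the sense of
Dirichlet. Hence so does the number of roots modulo `p` of a monic irreducible integer
polynomial.

Let `N(w)` be the number of `q`-th roots of `w` modulo `p`, where `q` is a prime. If `x` and `y`
have the same order modulo `p`, then `∑ N(x yᶜ) = (q - 1) N(x) + N(1)`, where the sum runs over
`0 ≤ c < q`. If no `x yᶜ` were a `q`-th power, then all polynomials `X ^ q - x yᶜ` would be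
irreducible, so that the left-hand side would have mean `q`; but the right-hand side has mean
`(q - 1) + 2`, since `X ^ q - 1` has two irreducible factors. So for every prime `q` some `x yᶜ` is
a `q`-th power, which forces a relation `xᵇ = yᵃ`. Comparing the orders of both sides modulo primes
`p` for which the order of `x` is divisible by a high power of a given prime gives `a = b`.
-/

open Filter Topology

section DirichletMean

/-- The weight `g` on the primes has mean value `c` in the sense of Dirichlet:
`∑ g(p) p⁻ˢ ∼ c * log (1 / (s - 1))` as `s → 1⁺`. The indicator function of a set of primes has
mean `c` iff the set has Dirichlet density `c`. -/
structure HasDirichletMean (g : Nat.Primes → ℝ) (c : ℝ) : Prop where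
  summable : ∀ᶠ s : ℝ in 𝓝[>] 1, Summable fun p ↦ g p * (p : ℝ) ^ (-s)
  tendsto : Tendsto (fun s : ℝ ↦ (∑' p, g p * (p : ℝ) ^ (-s)) / Real.log (s - 1)⁻¹)
    (𝓝[>] 1) (𝓝 c)

theorem tendsto_log_inv_sub_one : Tendsto (fun s : ℝ ↦ Real.log (s - 1)⁻¹) (𝓝[>] 1) atTop := by
  refine Real.tendsto_log_atTop.comp (tendsto_inv_nhdsGT_zero.comp ?_)
  have := tendsto_id.sub_const (1 : ℝ) |>.mono_left (nhdsWithin_le_nhds (a := 1) (s := Set.Ioi 1))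
  refine tendsto_nhdsWithin_iff.mpr ⟨by simpa using this, ?_⟩
  filter_upwards [self_mem_nhdsWithin] with s (hs : 1 < s) using sub_pos.mpr hs

namespace HasDirichletMean

variable {g g' : Nat.Primes → ℝ} {c c' : ℝ}

theorem unique (h : HasDirichletMean g c) (h' : HasDirichletMean g c') : c = c' :=
  tendsto_nhds_unique h.tendsto h'.tendsto

theorem const_mul (a : ℝ) (h : HasDirichletMean g c) :
    HasDirichletMean (fun p ↦ a * g p) (a * c) where
  summable := by
    filter_upwards [h.summable] with s hs
    simpa only [mul_assoc] using hs.mul_left a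
  tendsto := by simpa only [mul_assoc, tsum_mul_left, mul_div_assoc] using h.tendsto.const_mul a

theorem sum {ι : Type*} {S : Finset ι} {g : ι → Nat.Primes → ℝ} {c : ι → ℝ}
    (h : ∀ i ∈ S, HasDirichletMean (g i) (c i)) :
    HasDirichletMean (fun p ↦ ∑ i ∈ S, g i p) (∑ i ∈ S, c i) := by
  have hsum : ∀ᶠ s : ℝ in 𝓝[>] 1, ∀ i ∈ S, Summable fun p ↦ g i p * (p : ℝ) ^ (-s) :=
    (Finset.eventually_all S).mpr fun i hi ↦ (h i hi).summable
  refine ⟨?_, (tendsto_finsetSum S fun i hi ↦ (h i hi).tendsto).congr' ?_⟩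
  · filter_upwards [hsum] with s hs
    simpa only [Finset.sum_mul] using summable_sum hs
  · filter_upwards [hsum] with s hs
    simp only [Finset.sum_mul]
    rw [Summable.tsum_finsetSum hs, Finset.sum_div]

theorem add (h : HasDirichletMean g c) (h' : HasDirichletMean g' c') :
    HasDirichletMean (fun p ↦ g p + g' p) (c + c') where
  summable := by
    filter_upwards [h.summable, h'.summable] with s hs hs'
    simpa only [add_mul] using hs.add hs'
  tendsto := by
    refine (h.tendsto.add h'.tendsto).congr' ?_
    filter_upwards [h.summable, h'.summable] with s hs hs'
    simp only [add_mul]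
    rw [hs.tsum_add hs', add_div]

theorem of_finite_support (hg : g.support.Finite) : HasDirichletMean g 0 := by
  have hzero (s : ℝ) : ∀ p ∉ hg.toFinset, g p * (p : ℝ) ^ (-s) = 0 := by simp +contextual
  refine ⟨.of_forall fun s ↦ summable_of_ne_finset_zero (hzero s), ?_⟩
  have htsum (s : ℝ) : ∑' p, g p * (p : ℝ) ^ (-s) = ∑ p ∈ hg.toFinset, g p * (p : ℝ) ^ (-s) :=
    tsum_eq_sum (hzero s)
  simp only [htsum]
  have hcont : Continuous fun s : ℝ ↦ ∑ p ∈ hg.toFinset, g p * (p : ℝ) ^ (-s) :=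
    continuous_finsetSum _ fun p _ ↦ continuous_const.mul <|
      (Real.continuous_const_rpow (Nat.cast_ne_zero.mpr p.2.ne_zero)).comp continuous_neg
  exact (hcont.tendsto 1 |>.mono_left nhdsWithin_le_nhds).div_atTop tendsto_log_inv_sub_one

theorem congr (h : HasDirichletMean g c) (hg : g =ᶠ[cofinite] g') : HasDirichletMean g' c := by
  have hfin : (fun p ↦ g' p - g p).support.Finite :=
    (eventually_cofinite.mp hg).subset fun p hp ↦ (sub_ne_zero.mp hp).symm
  simpa using h.add (of_finite_support hfin)

end HasDirichletMean

end DirichletMean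

section EulerProduct

theorem abs_log_one_add_sub_le {v : ℝ} (hv : 0 ≤ v) : |Real.log (1 + v) - v| ≤ v ^ 2 := by
  have hpos : 0 < 1 + v := by positivity
  have hupper : Real.log (1 + v) ≤ v := by linarith [Real.log_le_sub_one_of_pos hpos]
  have hlower : v - v ^ 2 ≤ Real.log (1 + v) :=
    calc v - v ^ 2 ≤ 1 - (1 + v)⁻¹ := by
          rw [← sub_nonneg]
          have : 1 - (1 + v)⁻¹ - (v - v ^ 2) = v ^ 3 / (1 + v) := by field_simp; ring
          rw [this]
          positivity
      _ ≤ Real.log (1 + v) := Real.one_sub_inv_le_log_of_pos hpos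
  rw [abs_le]
  constructor <;> linarith [sq_nonneg v]

section PowerSeries

variable {a b : ℕ → ℝ} {r t : ℝ}

theorem summable_mul_pow_of_le (ha : ∀ e, 0 ≤ a e) (hab : ∀ e, a e ≤ b e)
    (hb : Summable fun e ↦ b e * r ^ e) (ht : 0 ≤ t) (htr : t ≤ r) :
    Summable fun e ↦ a e * t ^ e :=
  hb.of_nonneg_of_le (fun e ↦ mul_nonneg (ha e) (pow_nonneg ht e)) fun e ↦
    mul_le_mul (hab e) (pow_le_pow_left₀ ht htr e) (pow_nonneg ht e) ((ha e).trans (hab e))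

theorem tsum_nat_add_mul_pow_le (ha : ∀ e, 0 ≤ a e) (hab : ∀ e, a e ≤ b e)
    (hb : Summable fun e ↦ b e * r ^ e) (hr : 0 < r) (ht : 0 ≤ t) (htr : t ≤ r) (k : ℕ) :
    ∑' e, a (e + k) * t ^ (e + k) ≤ (∑' e, b e * r ^ e) * (t / r) ^ k := by
  have hb0 (e : ℕ) : 0 ≤ b e := (ha e).trans (hab e)
  have hle (e : ℕ) : a (e + k) * t ^ (e + k) ≤ b (e + k) * r ^ (e + k) * (t / r) ^ k :=
    calc a (e + k) * t ^ (e + k) ≤ b (e + k) * (r ^ e * t ^ k) := by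
          rw [pow_add]
          gcongr
          exacts [hb0 _, hab _]
      _ = b (e + k) * r ^ (e + k) * (t / r) ^ k := by rw [pow_add, div_pow]; field_simp
  have hbk : Summable fun e ↦ b (e + k) * r ^ (e + k) := (summable_nat_add_iff k).mpr hb
  calc ∑' e, a (e + k) * t ^ (e + k) ≤ ∑' e, b (e + k) * r ^ (e + k) * (t / r) ^ k :=
        ((summable_nat_add_iff k).mpr (summable_mul_pow_of_le ha hab hb ht htr)).tsum_le_tsum
          hle (hbk.mul_right _)
    _ = (∑' e, b (e + k) * r ^ (e + k)) * (t / r) ^ k := tsum_mul_right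
    _ ≤ (∑' e, b e * r ^ e) * (t / r) ^ k := by
      have hhead : 0 ≤ ∑ e ∈ Finset.range k, b e * r ^ e :=
        Finset.sum_nonneg fun e _ ↦ mul_nonneg (hb0 e) (pow_nonneg hr.le e)
      refine mul_le_mul_of_nonneg_right ?_ (by positivity)
      linarith [hb.sum_add_tsum_nat_add k]

theorem one_le_tsum_mul_pow (ha0 : a 0 = 1) (ha : ∀ e, 0 ≤ a e)
    (hsum : Summable fun e ↦ a e * t ^ e) (ht : 0 ≤ t) : 1 ≤ ∑' e, a e * t ^ e := by
  simpa [ha0] using hsum.le_tsum 0 fun e _ ↦ mul_nonneg (ha e) (pow_nonneg ht e)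

theorem abs_log_tsum_sub_le (ha0 : a 0 = 1) (ha : ∀ e, 0 ≤ a e) (hab : ∀ e, a e ≤ b e)
    (hb : Summable fun e ↦ b e * r ^ e) (hr : 0 < r) (ht : 0 ≤ t) (htr : t ≤ r) :
    |Real.log (∑' e, a e * t ^ e) - a 1 * t| ≤
      ((∑' e, b e * r ^ e) + (∑' e, b e * r ^ e) ^ 2) / r ^ 2 * t ^ 2 := by
  have hsum := summable_mul_pow_of_le ha hab hb ht htr
  have htail := tsum_nat_add_mul_pow_le ha hab hb hr ht htr
  set B := ∑' e, b e * r ^ e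
  set v := ∑' e, a (e + 1) * t ^ (e + 1)
  set w := ∑' e, a (e + 2) * t ^ (e + 2)
  have hv0 : 0 ≤ v := tsum_nonneg fun e ↦ mul_nonneg (ha _) (pow_nonneg ht _)
  have hw0 : 0 ≤ w := tsum_nonneg fun e ↦ mul_nonneg (ha _) (pow_nonneg ht _)
  have htotal : ∑' e, a e * t ^ e = 1 + v := by simp [hsum.tsum_eq_zero_add, ha0, v]
  have hvw : v = a 1 * t + w := by
    simpa [v, w] using ((summable_nat_add_iff 1).mpr hsum).tsum_eq_zero_add
  calc |Real.log (∑' e, a e * t ^ e) - a 1 * t| = |Real.log (1 + v) - v + w| := by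
        rw [htotal, hvw]; ring_nf
    _ ≤ |Real.log (1 + v) - v| + |w| := abs_add_le _ _
    _ ≤ v ^ 2 + w := add_le_add (abs_log_one_add_sub_le hv0) (abs_of_nonneg hw0).le
    _ ≤ (B * (t / r)) ^ 2 + B * (t / r) ^ 2 := by
      gcongr
      exacts [by simpa using htail 1, htail 2]
    _ = (B + B ^ 2) / r ^ 2 * t ^ 2 := by ring

end PowerSeries

theorem hasSum_log_of_hasProd {ι : Type*} {f : ι → ℝ} {a : ℝ} (hf : ∀ i, f i ≠ 0) (ha : a ≠ 0)
    (h : HasProd f a) : HasSum (fun i ↦ Real.log (f i)) (Real.log a) :=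
  ((Real.continuousAt_log ha).tendsto.comp h).congr fun _ ↦ Real.log_prod fun i _ ↦ hf i

variable {f : ℕ → ℝ}

theorem hasProd_tsum_prime_pow_mul_rpow {s : ℝ} (hs : s ≠ 0) (hf1 : f 1 = 1)
    (hmul : ∀ {m n : ℕ}, m.Coprime n → f (m * n) = f m * f n)
    (hsum : Summable fun n : ℕ ↦ f n * (n : ℝ) ^ (-s)) :
    HasProd (fun p : Nat.Primes ↦ ∑' e : ℕ, f (p ^ e) * ((p : ℝ) ^ (-s)) ^ e)
      (∑' n : ℕ, f n * (n : ℝ) ^ (-s)) := by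
  have hpow (p : Nat.Primes) (e : ℕ) : ((p ^ e : ℕ) : ℝ) ^ (-s) = ((p : ℝ) ^ (-s)) ^ e := by
    rw [Nat.cast_pow, ← Real.rpow_natCast, ← Real.rpow_natCast, ← Real.rpow_mul (by positivity),
      ← Real.rpow_mul (by positivity), mul_comm]
  simp_rw [← hpow]
  refine EulerProduct.eulerProduct_hasProd (f := fun n ↦ f n * (n : ℝ) ^ (-s)) (by simp [hf1])
    (fun {m n} hmn ↦ ?_) hsum.norm (by simp [Real.zero_rpow (neg_ne_zero.mpr hs)])
  rw [hmul hmn, Nat.cast_mul, Real.mul_rpow (by positivity) (by positivity), mul_mul_mul_comm]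

theorem rpow_neg_le_half {s : ℝ} (hs : 1 ≤ s) (p : Nat.Primes) : (p : ℝ) ^ (-s) ≤ 1 / 2 := by
  have hp : (2 : ℝ) ≤ p := mod_cast p.2.two_le
  calc (p : ℝ) ^ (-s) ≤ (p : ℝ) ^ (-1 : ℝ) :=
        Real.rpow_le_rpow_of_exponent_le (by linarith) (by linarith)
    _ ≤ 1 / 2 := by rw [Real.rpow_neg_one, one_div]; gcongr

theorem exists_abs_log_tsum_sub_tsum_primes_le {b : ℕ → ℝ} (hf0 : ∀ n, 0 ≤ f n) (hf1 : f 1 = 1)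
    (hmul : ∀ {m n : ℕ}, m.Coprime n → f (m * n) = f m * f n)
    (hfb : ∀ (p : Nat.Primes) (e : ℕ), f (p ^ e) ≤ b e)
    (hb : Summable fun e ↦ b e * (1 / 2 : ℝ) ^ e) :
    ∃ C : ℝ, ∀ s : ℝ, 1 < s → (∑' n : ℕ, f n * (n : ℝ) ^ (-s)) ≠ 0 →
      (Summable fun p : Nat.Primes ↦ f p * (p : ℝ) ^ (-s)) ∧
      |Real.log (∑' n : ℕ, f n * (n : ℝ) ^ (-s)) -
        ∑' p : Nat.Primes, f p * (p : ℝ) ^ (-s)| ≤ C := by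
  let A := ((∑' e, b e * (1 / 2 : ℝ) ^ e) + (∑' e, b e * (1 / 2 : ℝ) ^ e) ^ 2) / (1 / 2) ^ 2
  refine ⟨∑' p : Nat.Primes, A * (p : ℝ) ^ (-2 : ℝ), fun s hs hZ ↦ ?_⟩
  let F (p : Nat.Primes) : ℝ := ∑' e : ℕ, f (p ^ e) * ((p : ℝ) ^ (-s)) ^ e
  have ht (p : Nat.Primes) : 0 ≤ (p : ℝ) ^ (-s) := by positivity
  have hhalf := rpow_neg_le_half hs.le
  have hF0 (p : Nat.Primes) : F p ≠ 0 :=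
    (zero_lt_one.trans_le <| one_le_tsum_mul_pow (by simpa) (fun _ ↦ hf0 _)
      (summable_mul_pow_of_le (fun _ ↦ hf0 _) (hfb p) hb (ht p) (hhalf p)) (ht p)).ne'
  have hlog : HasSum (fun p ↦ Real.log (F p)) (Real.log (∑' n : ℕ, f n * (n : ℝ) ^ (-s))) :=
    hasSum_log_of_hasProd hF0 hZ <| hasProd_tsum_prime_pow_mul_rpow (by linarith) hf1 hmul <|
      by_contra fun h ↦ hZ (tsum_eq_zero_of_not_summable h)
  have hsq : Summable fun p : Nat.Primes ↦ A * (p : ℝ) ^ (-2 : ℝ) :=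
    (Nat.Primes.summable_rpow.mpr (by norm_num)).mul_left A
  have hlinear (p : Nat.Primes) :
      ‖Real.log (F p) - f p * (p : ℝ) ^ (-s)‖ ≤ A * (p : ℝ) ^ (-2 : ℝ) := by
    have hA : 0 ≤ A := by
      have : 0 ≤ ∑' e, b e * (1 / 2 : ℝ) ^ e :=
        tsum_nonneg fun e ↦ mul_nonneg ((hf0 _).trans (hfb p e)) (by positivity)
      positivity
    have hle := abs_log_tsum_sub_le (by simpa) (fun _ ↦ hf0 _) (hfb p) hb one_half_pos
      (ht p) (hhalf p)
    rw [pow_one] at hle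
    refine hle.trans (mul_le_mul_of_nonneg_left ?_ hA)
    rw [← Real.rpow_natCast, ← Real.rpow_mul (by positivity)]
    exact Real.rpow_le_rpow_of_exponent_le (mod_cast p.2.one_le) (by norm_num; linarith)
  have hprimes : Summable fun p : Nat.Primes ↦ f p * (p : ℝ) ^ (-s) := by
    simpa using hlog.summable.sub (.of_norm_bounded hsq hlinear)
  refine ⟨hprimes, ?_⟩
  rw [← hlog.tsum_eq, ← hlog.summable.tsum_sub hprimes]
  exact tsum_of_norm_bounded hsq.hasSum hlinear

theorem hasDirichletMean_of_tendsto_rpow_mul_tsum {b : ℕ → ℝ} {c ρ : ℝ} (hf0 : ∀ n, 0 ≤ f n)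
    (hf1 : f 1 = 1) (hmul : ∀ {m n : ℕ}, m.Coprime n → f (m * n) = f m * f n)
    (hfb : ∀ (p : Nat.Primes) (e : ℕ), f (p ^ e) ≤ b e)
    (hb : Summable fun e ↦ b e * (1 / 2 : ℝ) ^ e) (hρ : ρ ≠ 0)
    (hlim : Tendsto (fun s : ℝ ↦ (s - 1) ^ c * ∑' n : ℕ, f n * (n : ℝ) ^ (-s)) (𝓝[>] 1) (𝓝 ρ)) :
    HasDirichletMean (fun p ↦ f p) c := by
  obtain ⟨C, hC⟩ := exists_abs_log_tsum_sub_tsum_primes_le hf0 hf1 hmul hfb hb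
  let Z (s : ℝ) : ℝ := ∑' n : ℕ, f n * (n : ℝ) ^ (-s)
  let P (s : ℝ) : ℝ := ∑' p : Nat.Primes, f p * (p : ℝ) ^ (-s)
  have hgood : ∀ᶠ s in 𝓝[>] 1, 1 < s ∧ Z s ≠ 0 := by
    filter_upwards [self_mem_nhdsWithin, hlim.eventually_ne hρ] with s hs hne
    exact ⟨hs, right_ne_zero_of_mul hne⟩
  refine ⟨hgood.mono fun s hs ↦ (hC s hs.1 hs.2).1, ?_⟩
  have hlogZ : Tendsto (fun s ↦ Real.log ((s - 1) ^ c * Z s) / Real.log (s - 1)⁻¹)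
      (𝓝[>] 1) (𝓝 0) := (hlim.log hρ).div_atTop tendsto_log_inv_sub_one
  have hdiff : Tendsto (fun s ↦ (Real.log (Z s) - P s) / Real.log (s - 1)⁻¹) (𝓝[>] 1) (𝓝 0) := by
    refine squeeze_zero_norm' ?_ (tendsto_log_inv_sub_one.const_div_atTop C)
    filter_upwards [hgood, tendsto_log_inv_sub_one.eventually_gt_atTop 0] with s hs hL
    rw [norm_div, Real.norm_of_nonneg hL.le]
    exact div_le_div_of_nonneg_right (hC s hs.1 hs.2).2 hL.le
  have htotal := (hlogZ.sub hdiff).const_add c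
  rw [sub_zero, add_zero] at htotal
  refine htotal.congr' ?_
  filter_upwards [hgood, tendsto_log_inv_sub_one.eventually_gt_atTop 0] with s ⟨hs, hZ⟩ hL
  have hs0 : 0 < s - 1 := sub_pos.mpr hs
  rw [Real.log_mul (Real.rpow_pos_of_pos hs0 c).ne' hZ, Real.log_rpow hs0]
  rw [Real.log_inv] at hL ⊢
  have hlog : Real.log (s - 1) ≠ 0 := (neg_pos.mp hL).ne
  change _ = P s / _
  field_simp
  ring

end EulerProduct

section IdealCount

open Ideal UniqueFactorizationMonoid

theorem sup_mul_sup_eq_of_isCoprime {R : Type*} [CommRing R] {I A B : Ideal R}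
    (hAB : IsCoprime A B) (hI : A * B ≤ I) : (I ⊔ A) * (I ⊔ B) = I := by
  apply le_antisymm
  · rw [Ideal.sup_mul, Ideal.mul_sup, Ideal.mul_sup]
    exact sup_le (sup_le mul_le_left mul_le_left) (sup_le mul_le_right hI)
  · calc I = B * I ⊔ I * A := by
          rw [mul_comm B, ← Ideal.mul_sup, sup_comm, hAB.sup_eq, mul_top]
      _ ≤ (I ⊔ A) * (I ⊔ B) := by
        rw [mul_comm B]
        exact sup_le (mul_mono le_sup_left le_sup_right)
          ((mul_comm I A).trans_le (mul_mono le_sup_right le_sup_left))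

theorem encard_dvd_prod_pow_le {α : Type*} [CommMonoidWithZero α] [IsCancelMulZero α]
    [DecompositionMonoid α] [Subsingleton αˣ] {M : Multiset α} (hM : ∀ a ∈ M, Prime a) (e : ℕ) :
    {x | x ∣ M.prod ^ e}.encard ≤ ((e + 1) ^ M.card : ℕ) := by
  induction M using Multiset.induction_on with
  | empty => simp [← isUnit_iff_dvd_one]
  | cons a M ih =>
    obtain ⟨ha, hM⟩ := Multiset.forall_mem_cons.mp hM
    have hsub : {x | x ∣ (a ::ₘ M).prod ^ e} ⊆
        (fun y : ℕ × α ↦ a ^ y.1 * y.2) '' (Set.Iic e ×ˢ {x | x ∣ M.prod ^ e}) := by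
      intro x hx
      rw [Multiset.prod_cons, mul_pow, Set.mem_ofPred_eq] at hx
      obtain ⟨y, z, hy, hz, rfl⟩ := exists_dvd_and_dvd_of_dvd_mul hx
      obtain ⟨i, hi, hyi⟩ := (dvd_prime_pow ha e).mp hy
      exact ⟨(i, z), ⟨hi, hz⟩, by rw [associated_iff_eq.mp hyi]⟩
    calc {x | x ∣ (a ::ₘ M).prod ^ e}.encard
        ≤ (Set.Iic e ×ˢ {x | x ∣ M.prod ^ e}).encard :=
          (Set.encard_le_encard hsub).trans (Set.encard_image_le _ _)
      _ ≤ ((e + 1 : ℕ) : ℕ∞) * ((e + 1) ^ M.card : ℕ) := by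
        rw [Set.encard_prod]
        refine mul_le_mul' ?_ (ih hM)
        simp [Set.encard_eq_coe_toFinset_card]
      _ = ((e + 1) ^ (a ::ₘ M).card : ℕ) := by
        rw [Multiset.card_cons, pow_succ', Nat.cast_mul]

variable {S : Type*} [CommRing S] [IsDedekindDomain S] [Module.Free ℤ S]

theorem isCoprime_of_coprime_absNorm {I J : Ideal S} (h : (absNorm I).Coprime (absNorm J)) :
    IsCoprime I J := by
  rw [isCoprime_iff_sup_eq, ← absNorm_eq_one_iff]
  exact Nat.eq_one_of_dvd_coprimes h (absNorm_dvd_absNorm_of_le le_sup_left)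
    (absNorm_dvd_absNorm_of_le le_sup_right)

variable (S) in
/-- The number of ideals of norm `n` in `S`. For the ring of integers of a number field these are
the coefficients of the Dedekind zeta function. -/
noncomputable def idealCount (n : ℕ) : ℕ := Nat.card {I : Ideal S // absNorm I = n}

theorem idealCount_one : idealCount S 1 = 1 := by
  simp [idealCount]

theorem sup_span_natCast_mul_sup_span_natCast {I : Ideal S} {m n : ℕ} (h : m.Coprime n)
    (hI : absNorm I = m * n) : (I ⊔ span {(m : S)}) * (I ⊔ span {(n : S)}) = I := by
  refine sup_mul_sup_eq_of_isCoprime ((isCoprime_span_singleton_iff _ _).mpr h.cast) ?_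
  rw [span_singleton_mul_span_singleton, span_singleton_le_iff_mem, ← Nat.cast_mul, ← hI]
  exact absNorm_mem I

variable [Module.Finite ℤ S]

theorem isCoprime_span_natCast_of_coprime {I : Ideal S} {m : ℕ} (h : (absNorm I).Coprime m) :
    IsCoprime I (span {(m : S)}) :=
  isCoprime_of_coprime_absNorm <| by rw [absNorm_span_natCast]; exact h.pow_right _

theorem mul_sup_span_natCast_eq {A B : Ideal S} (h : (absNorm A).Coprime (absNorm B)) :
    A * B ⊔ span {(absNorm A : S)} = A := by
  rw [mul_sup_eq_of_coprime_right (isCoprime_span_natCast_of_coprime h.symm).sup_eq, sup_eq_left,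
    span_singleton_le_iff_mem]
  exact absNorm_mem A

theorem absNorm_sup_span_natCast {I : Ideal S} {m n : ℕ} (h : m.Coprime n)
    (hI : absNorm I = m * n) : absNorm (I ⊔ span {(m : S)}) = m := by
  have hcoprime {k l : ℕ} (hkl : k.Coprime l) : (absNorm (I ⊔ span {(k : S)})).Coprime l :=
    (hkl.pow_left (Module.finrank ℤ S)).coprime_dvd_left <| by
      rw [← absNorm_span_natCast]
      exact absNorm_dvd_absNorm_of_le le_sup_right
  have hmul : absNorm (I ⊔ span {(m : S)}) * absNorm (I ⊔ span {(n : S)}) = m * n := by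
    rw [← map_mul, sup_span_natCast_mul_sup_span_natCast h hI, hI]
  exact Nat.dvd_antisymm ((hcoprime h).dvd_of_dvd_mul_right (hmul ▸ dvd_mul_right _ _))
    ((hcoprime h.symm).symm.dvd_of_dvd_mul_right (hmul ▸ dvd_mul_right _ _))

theorem idealCount_mul {m n : ℕ} (h : m.Coprime n) :
    idealCount S (m * n) = idealCount S m * idealCount S n := by
  rw [idealCount, idealCount, idealCount, ← Nat.card_prod]
  refine Nat.card_congr
    { toFun I := (⟨I ⊔ span {(m : S)}, absNorm_sup_span_natCast h I.2⟩,
        ⟨I ⊔ span {(n : S)}, absNorm_sup_span_natCast h.symm (I.2.trans (mul_comm m n))⟩)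
      invFun P := ⟨P.1 * P.2, by rw [map_mul, P.1.2, P.2.2]⟩
      left_inv I := Subtype.ext (sup_span_natCast_mul_sup_span_natCast h I.2)
      right_inv := ?_ }
  rintro ⟨⟨A, rfl⟩, ⟨B, rfl⟩⟩
  refine Prod.ext (Subtype.ext (mul_sup_span_natCast_eq h)) (Subtype.ext ?_)
  dsimp only
  rw [mul_comm A B, mul_sup_span_natCast_eq h.symm]

theorem prod_normalizedFactors_span_natCast {n : ℕ} (hn : n ≠ 0) :
    (normalizedFactors (span {(n : S)})).prod = span {(n : S)} := by
  have hspan : span {(n : S)} ≠ 0 := fun h ↦ pow_ne_zero (Module.finrank ℤ S) hn <| by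
    rw [← absNorm_span_natCast, h, map_zero]
  exact associated_iff_eq.mp (prod_normalizedFactors hspan)

theorem card_normalizedFactors_span_natCast_le {p : ℕ} (hp : p.Prime) :
    (normalizedFactors (span {(p : S)})).card ≤ Module.finrank ℤ S := by
  have hle : ∀ n ∈ (normalizedFactors (span {(p : S)})).map absNorm, p ≤ n := by
    intro n hn
    obtain ⟨P, hP, rfl⟩ := Multiset.mem_map.mp hn
    obtain ⟨k, -, hk⟩ := (Nat.dvd_prime_pow hp).mp
      (absNorm_span_natCast (S := S) p ▸ map_dvd absNorm (dvd_of_mem_normalizedFactors hP))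
    have hk0 : k ≠ 0 := by
      rintro rfl
      rw [pow_zero, absNorm_eq_one_iff] at hk
      exact (prime_of_normalized_factor P hP).not_isUnit (isUnit_iff.mpr hk)
    exact hk ▸ Nat.le_self_pow hk0 p
  rw [← Nat.pow_le_pow_iff_right hp.one_lt, ← absNorm_span_natCast (S := S)]
  calc p ^ (normalizedFactors (span {(p : S)})).card
      ≤ ((normalizedFactors (span {(p : S)})).map absNorm).prod := by
        simpa using Multiset.pow_card_le_prod hle
    _ = absNorm (span {(p : S)}) := by
      rw [← map_multiset_prod, prod_normalizedFactors_span_natCast hp.ne_zero]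

theorem idealCount_prime_pow_le {p : ℕ} (hp : p.Prime) (e : ℕ) :
    idealCount S (p ^ e) ≤ (e + 1) ^ Module.finrank ℤ S := by
  have hsub : {I : Ideal S | absNorm I = p ^ e} ⊆
      {I | I ∣ (normalizedFactors (span {(p : S)})).prod ^ e} := by
    intro I hI
    rw [Set.mem_ofPred_eq, prod_normalizedFactors_span_natCast hp.ne_zero, dvd_iff_le,
      span_singleton_pow, span_singleton_le_iff_mem, ← Nat.cast_pow, ← Set.mem_ofPred_eq.mp hI]
    exact absNorm_mem I
  have hcard : (idealCount S (p ^ e) : ℕ∞) ≤ _ :=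
    (Set.ncard_le_encard _).trans <| (Set.encard_le_encard hsub).trans <|
      encard_dvd_prod_pow_le (fun P hP ↦ prime_of_normalized_factor P hP) e
  exact (Nat.cast_le.mp hcard).trans
    (Nat.pow_le_pow_right e.succ_pos (card_normalizedFactors_span_natCast_le hp))

end IdealCount

section DedekindZeta

open NumberField

variable (K : Type*) [Field K] [NumberField K]

theorem dedekindZeta_ofReal {s : ℝ} (hs : s ≠ 0) :
    dedekindZeta K s = ((∑' n : ℕ, idealCount (𝓞 K) n * (n : ℝ) ^ (-s) : ℝ) : ℂ) := by
  rw [dedekindZeta, LSeries, Complex.ofReal_tsum]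
  refine tsum_congr fun n ↦ ?_
  rcases eq_or_ne n 0 with rfl | hn
  · simp [Real.zero_rpow (neg_ne_zero.mpr hs)]
  · rw [LSeries.term_of_ne_zero hn, idealCount, Complex.ofReal_mul,
      Complex.ofReal_cpow (by positivity)]
    push_cast
    rw [Complex.cpow_neg, div_eq_mul_inv]

theorem tendsto_sub_one_mul_tsum_idealCount :
    Tendsto (fun s : ℝ ↦ (s - 1) * ∑' n : ℕ, idealCount (𝓞 K) n * (n : ℝ) ^ (-s)) (𝓝[>] 1)
      (𝓝 (dedekindZeta_residue K)) := by
  refine ((Complex.continuous_re.tendsto _).comp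
    (tendsto_sub_one_mul_dedekindZeta_nhdsGT K)).congr' ?_
  filter_upwards [self_mem_nhdsWithin] with s (hs : 1 < s)
  rw [Function.comp_apply, dedekindZeta_ofReal K (by linarith), ← Complex.ofReal_one,
    ← Complex.ofReal_sub, ← Complex.ofReal_mul, Complex.ofReal_re]

theorem hasDirichletMean_idealCount : HasDirichletMean (fun p ↦ idealCount (𝓞 K) p) 1 := by
  have hsum : Summable fun e : ℕ ↦ (e + 1 : ℝ) ^ Module.finrank ℤ (𝓞 K) * (1 / 2) ^ e := by
    refine (((summable_nat_add_iff 1).mpr <| summable_pow_mul_geometric_of_norm_lt_one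
      (r := (1 / 2 : ℝ)) (Module.finrank ℤ (𝓞 K)) (by norm_num)).mul_left 2).congr fun e ↦ ?_
    push_cast
    ring
  refine hasDirichletMean_of_tendsto_rpow_mul_tsum (f := fun n ↦ idealCount (𝓞 K) n)
    (fun _ ↦ Nat.cast_nonneg _) (by simp [idealCount_one])
    (fun h ↦ by rw [idealCount_mul h, Nat.cast_mul])
    (fun p e ↦ mod_cast idealCount_prime_pow_le p.2 e) hsum (dedekindZeta_residue_pos K).ne' ?_
  simpa only [Real.rpow_one] using tendsto_sub_one_mul_tsum_idealCount K

end DedekindZeta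

section Points

open Ideal Polynomial

theorem ringHom_zmod_ext_of_ker_eq {R : Type*} [CommRing R] {p : ℕ} {φ ψ : R →+* ZMod p}
    (h : RingHom.ker φ = RingHom.ker ψ) : φ = ψ := by
  ext r
  obtain ⟨n, hn⟩ := ZMod.intCast_surjective (φ r)
  have hφ : r - n ∈ RingHom.ker φ := by simp [RingHom.mem_ker, hn]
  have hψ : r - n ∈ RingHom.ker ψ := h ▸ hφ
  rw [RingHom.mem_ker, map_sub, map_intCast, sub_eq_zero] at hφ hψ
  rw [hφ, hψ]

theorem card_ringHom_zmod (R : Type*) [CommRing R] {p : ℕ} (hp : p.Prime) :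
    Nat.card (R →+* ZMod p) = Nat.card {I : Ideal R // Nat.card (R ⧸ I) = p} := by
  have : Fact p.Prime := ⟨hp⟩
  have hcard (φ : R →+* ZMod p) : Nat.card (R ⧸ RingHom.ker φ) = p := by
    rw [Nat.card_congr (RingHom.quotientKerEquivOfSurjective (ZMod.ringHom_surjective φ)).toEquiv,
      Nat.card_zmod]
  refine Nat.card_congr (Equiv.ofBijective (fun φ ↦ ⟨RingHom.ker φ, hcard φ⟩) ⟨fun φ ψ h ↦ ?_, ?_⟩)
  · exact ringHom_zmod_ext_of_ker_eq (congrArg Subtype.val h)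
  · rintro ⟨I, hI⟩
    have : Finite (R ⧸ I) := Nat.finite_of_card_ne_zero (hI ▸ hp.ne_zero)
    have : Fintype (R ⧸ I) := Fintype.ofFinite _
    let e := ZMod.ringEquivOfPrime (R ⧸ I) hp (Nat.card_eq_fintype_card.symm.trans hI)
    refine ⟨(e.symm : R ⧸ I →+* ZMod p).comp (Ideal.Quotient.mk I), Subtype.ext ?_⟩
    exact (RingHom.ker_comp_of_injective _ e.symm.injective).trans mk_ker

theorem exists_ne_zero_forall_smul_mem_adjoin (R K : Type*) {L S : Type*} [CommRing R] [IsDomain R]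
    [IsIntegrallyClosed R] [Field K] [Algebra R K] [IsFractionRing R K] [Field L] [Algebra K L]
    [Algebra R L] [IsScalarTower R K L] [FiniteDimensional K L] [Algebra.IsSeparable K L]
    [CommRing S] [Algebra R S] [Algebra S L] [IsScalarTower R S L] [IsIntegralClosure S R L]
    {θ : S} (B : PowerBasis K L) (hB : B.gen = algebraMap S L θ) :
    ∃ d : R, d ≠ 0 ∧ ∀ b : S, d • b ∈ Algebra.adjoin R {θ} := by
  have hint (b : S) : IsIntegral R (algebraMap S L b) :=
    (IsIntegralClosure.isIntegral R L b).algebraMap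
  obtain ⟨d, hd⟩ : ∃ d : R, algebraMap R K d = Algebra.discr K B.basis := by
    refine IsIntegrallyClosed.isIntegral_iff.mp (Algebra.discr_isIntegral K fun i ↦ ?_)
    rw [B.basis_eq_pow, hB]
    exact (hint θ).pow i
  refine ⟨d, ?_, fun b ↦ ?_⟩
  · rintro rfl
    exact Algebra.discr_not_zero_of_basis K B.basis (by simpa using hd.symm)
  · have h := Algebra.discr_mul_isIntegral_mem_adjoin (R := R) K (hB ▸ hint θ) (hint b)
    have hmap : Algebra.adjoin R {B.gen} =
        (Algebra.adjoin R {θ}).map (IsScalarTower.toAlgHom R S L) := by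
      rw [AlgHom.map_adjoin, Set.image_singleton, hB, IsScalarTower.coe_toAlgHom']
    rw [hmap, ← hd, algebraMap_smul, ← IsScalarTower.coe_toAlgHom' R S L, ← map_smul] at h
    obtain ⟨z, hz, hzb⟩ := h
    exact IsIntegralClosure.algebraMap_injective S R L hzb ▸ hz

section Extension

variable {R S k : Type*} [CommRing R] [CommRing S] [Algebra R S] [Field k] [Algebra R k]
  {A : Subalgebra R S} {d : R}

theorem exists_algHom_comp_val_eq (hd : algebraMap R k d ≠ 0) (hA : ∀ b : S, d • b ∈ A)
    (φ : A →ₐ[R] k) : ∃ ψ : S →ₐ[R] k, ψ.comp A.val = φ := by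
  let den (b : S) : A := ⟨d • b, hA b⟩
  have hden_val (a : A) : den a = d • a := rfl
  have hden_algebraMap (r : R) : den (algebraMap R S r) = d • algebraMap R A r := by
    ext
    simp [den]
  have hden_mul (a b : S) : d • den (a * b) = den a * den b := by
    ext
    simp [den, smul_smul]
  have hden_add (a b : S) : den (a + b) = den a + den b := by
    ext
    simp [den]
  have hφ_smul (a : A) : φ (d • a) = algebraMap R k d * φ a := by rw [map_smul, Algebra.smul_def]
  let ψ (b : S) : k := (algebraMap R k d)⁻¹ * φ (den b)
  have hψ_val (a : A) : ψ a = φ a := by simp only [ψ, hden_val, hφ_smul, inv_mul_cancel_left₀ hd]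
  have hψ_algebraMap (r : R) : ψ (algebraMap R S r) = algebraMap R k r := by
    simp only [ψ, hden_algebraMap, hφ_smul, inv_mul_cancel_left₀ hd, AlgHom.commutes]
  have hψ_mul (a b : S) : ψ (a * b) = ψ a * ψ b := by
    have hφ_mul := congrArg φ (hden_mul a b)
    rw [hφ_smul, map_mul] at hφ_mul
    simp only [ψ]
    field_simp
    rw [← hφ_mul, mul_comm]
  have hψ_add (a b : S) : ψ (a + b) = ψ a + ψ b := by simp only [ψ, hden_add, map_add, mul_add]
  refine ⟨⟨⟨⟨⟨ψ, ?_⟩, hψ_mul⟩, ?_, hψ_add⟩, hψ_algebraMap⟩, AlgHom.ext hψ_val⟩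
  · simpa using hψ_algebraMap 1
  · simpa using hψ_algebraMap 0

theorem bijective_algHom_comp_val (hd : algebraMap R k d ≠ 0) (hA : ∀ b : S, d • b ∈ A) :
    Function.Bijective fun φ : S →ₐ[R] k ↦ φ.comp A.val := by
  refine ⟨fun φ ψ h ↦ ?_, exists_algHom_comp_val_eq hd hA⟩
  ext b
  have hb : φ (d • b) = ψ (d • b) := DFunLike.congr_fun h (⟨d • b, hA b⟩ : A)
  simpa [Algebra.smul_def, hd] using hb

end Extension

theorem card_algHom_eq_card_aeval_minpoly_eq_zero {R S k : Type*} [CommRing R] [IsDomain R]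
    [IsIntegrallyClosed R] [CommRing S] [IsDomain S] [Algebra R S] [Module.IsTorsionFree R S]
    [Field k] [Algebra R k] {θ : S} (hθ : IsIntegral R θ) {d : R} (hd : algebraMap R k d ≠ 0)
    (h : ∀ b : S, d • b ∈ Algebra.adjoin R {θ}) :
    Nat.card (S →ₐ[R] k) = Nat.card {r : k // aeval r (minpoly R θ) = 0} := by
  rw [Nat.card_congr (Equiv.ofBijective _ (bijective_algHom_comp_val hd h)),
    Nat.card_congr (Algebra.adjoin.powerBasis' hθ).liftEquiv,
    ← Algebra.adjoin.powerBasis'_minpoly_gen]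

end Points

section RootCount

open Polynomial NumberField

/-- The number of roots modulo `p` of an integer polynomial `f`. -/
noncomputable def modRootCount (f : ℤ[X]) (p : ℕ) : ℕ := Nat.card {r : ZMod p // aeval r f = 0}

theorem idealCount_eq_modRootCount {S : Type*} [CommRing S] [IsDedekindDomain S]
    [Module.Free ℤ S] {θ : S} (hθ : IsIntegral ℤ θ) {d : ℤ}
    (h : ∀ b : S, d • b ∈ Algebra.adjoin ℤ {θ}) {p : ℕ} (hp : p.Prime) (hd : ¬ (p : ℤ) ∣ d) :
    idealCount S p = modRootCount (minpoly ℤ θ) p := by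
  have : Fact p.Prime := ⟨hp⟩
  have hd' : algebraMap ℤ (ZMod p) d ≠ 0 := by
    rwa [algebraMap_int_eq, eq_intCast, ne_eq, ZMod.intCast_zmod_eq_zero_iff_dvd]
  rw [modRootCount, ← card_algHom_eq_card_aeval_minpoly_eq_zero hθ hd' h,
    ← Nat.card_congr (RingHom.equivIntAlgHom S (ZMod p)), card_ringHom_zmod S hp, idealCount]
  simp only [Ideal.absNorm_apply, Submodule.cardQuot_apply]

theorem tendsto_primes_coe_cofinite_atTop :
    Tendsto ((↑) : Nat.Primes → ℕ) cofinite atTop :=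
  Nat.cofinite_eq_atTop ▸ Nat.Primes.coe_nat_injective.tendsto_cofinite

theorem eventually_primes_not_dvd {n : ℕ} (hn : n ≠ 0) :
    ∀ᶠ p : Nat.Primes in cofinite, ¬ (p : ℕ) ∣ n := by
  filter_upwards [tendsto_primes_coe_cofinite_atTop.eventually_gt_atTop n] with p hp
    using Nat.not_dvd_of_pos_of_lt hn.bot_lt hp

theorem hasDirichletMean_modRootCount_minpoly (K : Type*) [Field K] [NumberField K] {θ : 𝓞 K}
    (B : PowerBasis ℚ K) (hB : B.gen = θ) :
    HasDirichletMean (fun p ↦ modRootCount (minpoly ℤ θ) p) 1 := by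
  obtain ⟨d, hd, hadjoin⟩ := exists_ne_zero_forall_smul_mem_adjoin ℤ ℚ B hB
  refine (hasDirichletMean_idealCount K).congr ?_
  filter_upwards [eventually_primes_not_dvd (Int.natAbs_ne_zero.mpr hd)] with p hp
  rw [idealCount_eq_modRootCount θ.isIntegral hadjoin p.2 (mt Int.natCast_dvd.mp hp)]

/-- The class number formula for `ℚ[X] / (f)`, whose ideals of norm `p` correspond to the roots of
`f` modulo `p` for all but finitely many `p`. -/
theorem hasDirichletMean_modRootCount {f : ℤ[X]} (hf : f.Monic) (hirr : Irreducible f) :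
    HasDirichletMean (fun p ↦ modRootCount f p) 1 := by
  have hirrQ : Irreducible (f.map (Int.castRingHom ℚ)) :=
    (hf.irreducible_iff_irreducible_map_fraction_map (K := ℚ)).mp hirr
  have : Fact (Irreducible (f.map (Int.castRingHom ℚ))) := ⟨hirrQ⟩
  let K := AdjoinRoot (f.map (Int.castRingHom ℚ))
  let B : PowerBasis ℚ K := AdjoinRoot.powerBasis hirrQ.ne_zero
  have : NumberField K :=
    { to_charZero := charZero_of_injective_algebraMap (algebraMap ℚ K).injective
      to_finiteDimensional := B.finite }
  have hroot : aeval B.gen f = 0 := by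
    rw [← aeval_map_algebraMap ℚ]
    exact (AdjoinRoot.aeval_eq _).trans AdjoinRoot.mk_self
  let θ : 𝓞 K := ⟨B.gen, f, hf, hroot⟩
  have hθ : aeval θ f = 0 := by
    apply RingOfIntegers.coe_injective
    rw [← aeval_algebraMap_apply, map_zero]
    exact hroot
  have hmin : minpoly ℤ θ = f :=
    eq_of_monic_of_associated (minpoly.monic θ.isIntegral) hf <|
      (minpoly.irreducible θ.isIntegral).associated_of_dvd hirr
        (minpoly.isIntegrallyClosed_dvd θ.isIntegral hθ)
  exact hmin ▸ hasDirichletMean_modRootCount_minpoly K B rfl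

end RootCount

section CyclicGroup

theorem card_preimage_singleton {G H : Type*} [Group G] [Group H] (f : G →* H) (h : H)
    [Decidable (h ∈ f.range)] :
    Nat.card (f ⁻¹' {h}) = if h ∈ f.range then Nat.card f.ker else 0 := by
  split_ifs with hf
  · obtain ⟨g, rfl⟩ := hf
    exact Nat.card_congr (f.fiberEquivKer g)
  · have : IsEmpty (f ⁻¹' {h}) := ⟨fun g ↦ hf ⟨g, g.2⟩⟩
    exact Nat.card_of_isEmpty

variable {G : Type*} [CommGroup G]

theorem ker_powMonoidHom_card [Finite G] [IsCyclic G] (H : Subgroup G) :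
    (powMonoidHom (Nat.card H) : G →* G).ker = H := by
  refine (Subgroup.eq_of_le_of_card_ge (fun g hg ↦ ?_) ?_).symm
  · exact congrArg Subtype.val (pow_card_eq_one' (x := (⟨g, hg⟩ : H)))
  · rw [IsCyclic.card_powMonoidHom_ker, Nat.gcd_eq_right H.card_subgroup_dvd_card]

theorem mem_subgroup_iff_of_orderOf_eq [Finite G] [IsCyclic G] {x y : G}
    (h : orderOf x = orderOf y) (H : Subgroup G) : x ∈ H ↔ y ∈ H := by
  rw [← ker_powMonoidHom_card H, MonoidHom.mem_ker, MonoidHom.mem_ker, powMonoidHom_apply,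
    powMonoidHom_apply, ← orderOf_dvd_iff_pow_eq_one, ← orderOf_dvd_iff_pow_eq_one, h]

/-- The cosets `y ^ c * H` for `c < H.index` are then distinct, so exactly one of the elements
`x * y ^ c` lies in `H`. -/
theorem sum_range_index_ite_mul_pow_mem {M : Type*} [AddCommMonoid M] {H : Subgroup G}
    [DecidablePred (· ∈ H)] (hH : H.index.Prime) (x : G) {y : G} (hy : y ∉ H) (m : M) :
    ∑ c ∈ Finset.range H.index, (if x * y ^ c ∈ H then m else 0) = m := by
  classical
  have : Fact H.index.Prime := ⟨hH⟩
  have : Finite (G ⧸ H) := Nat.finite_of_card_ne_zero hH.ne_zero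
  have : Fintype (G ⧸ H) := Fintype.ofFinite _
  have hgen : ∀ g : G ⧸ H, g ∈ Subgroup.zpowers (y : G ⧸ H) := fun g ↦
    mem_zpowers_of_prime_card (p := H.index) rfl ((QuotientGroup.eq_one_iff y).not.mpr hy)
  have hinj : Set.InjOn (fun c ↦ (y : G ⧸ H) ^ c) (Finset.range H.index) := by
    rw [Subgroup.index, ← orderOf_eq_card_of_forall_mem_zpowers hgen, Finset.coe_range]
    exact pow_injOn_Iio_orderOf
  calc ∑ c ∈ Finset.range H.index, (if x * y ^ c ∈ H then m else 0)
      = ∑ c ∈ Finset.range H.index, (if (y : G ⧸ H) ^ c = (x : G ⧸ H)⁻¹ then m else 0) := by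
        simp only [← QuotientGroup.eq_one_iff, QuotientGroup.mk_mul, QuotientGroup.mk_pow,
          eq_inv_iff_mul_eq_one, mul_comm]
    _ = ∑ g : G ⧸ H, if g = (x : G ⧸ H)⁻¹ then m else 0 := by
        rw [← IsCyclic.image_range_card hgen, ← Subgroup.index, Finset.sum_image hinj]
    _ = m := Fintype.sum_ite_eq' _ _

theorem sum_card_preimage_pow_mul_pow [Finite G] [IsCyclic G] {q : ℕ} (hq : q.Prime) {x y : G}
    (h : orderOf x = orderOf y) :
    ∑ c ∈ Finset.range q, Nat.card (powMonoidHom q ⁻¹' {x * y ^ c}) =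
      (q - 1) * Nat.card (powMonoidHom q ⁻¹' {x}) +
        Nat.card (powMonoidHom q ⁻¹' {(1 : G)}) := by
  classical
  simp only [card_preimage_singleton, one_mem, if_true]
  set H := (powMonoidHom q : G →* G).range
  by_cases hy : y ∈ H
  · have hx := (mem_subgroup_iff_of_orderOf_eq h H).mpr hy
    simp only [hx, H.mul_mem hx (H.pow_mem hy _), if_true, Finset.sum_const, Finset.card_range,
      smul_eq_mul]
    rw [← Nat.succ_mul, Nat.succ_eq_add_one, Nat.sub_add_cancel hq.one_le]
  · have hindex : H.index = q := by
      refine ((Nat.dvd_prime hq).mp ?_).resolve_left fun h1 ↦ hy ?_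
      · exact IsCyclic.index_powMonoidHom_range G q ▸ Nat.gcd_dvd_right _ q
      · exact Subgroup.index_eq_one.mp h1 ▸ Subgroup.mem_top y
    have hx := mt (mem_subgroup_iff_of_orderOf_eq h H).mp hy
    rw [if_neg hx, mul_zero, zero_add]
    exact hindex ▸ sum_range_index_ite_mul_pow_mem (hindex.symm ▸ hq) x hy _

end CyclicGroup

section PowerRoots

open Polynomial

/-- The number of `q`-th roots of `w` modulo `p`. -/
noncomputable def modPowRootCount (q w p : ℕ) : ℕ := Nat.card {t : ZMod p // t ^ q = w}

theorem irreducible_X_pow_sub_natCast {q w : ℕ} (hq : q.Prime) (hw : ∀ z : ℕ, z ^ q ≠ w) :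
    Irreducible (X ^ q - C (w : ℤ)) := by
  rw [(monic_X_pow_sub_C _ hq.ne_zero).irreducible_iff_irreducible_map_fraction_map (K := ℚ)]
  simp only [Polynomial.map_sub, Polynomial.map_pow, map_X, map_C]
  refine X_pow_sub_C_irreducible_of_prime hq fun b hb ↦ ?_
  have hb_int : IsIntegral ℤ b := .of_pow hq.pos (hb ▸ isIntegral_algebraMap)
  obtain ⟨z, rfl⟩ := IsIntegrallyClosed.isIntegral_iff.mp hb_int
  refine hw z.natAbs ?_
  rw [← Int.natAbs_pow, ← Int.natAbs_natCast w]
  exact congrArg Int.natAbs (by exact_mod_cast hb)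

theorem modPowRootCount_eq_modRootCount (q w p : ℕ) :
    modPowRootCount q w p = modRootCount (X ^ q - C (w : ℤ)) p := by
  simp only [modPowRootCount, modRootCount, map_sub, map_pow, aeval_X, map_natCast, sub_eq_zero]

theorem hasDirichletMean_modPowRootCount {q w : ℕ} (hq : q.Prime) (hw : ∀ z : ℕ, z ^ q ≠ w) :
    HasDirichletMean (fun p ↦ modPowRootCount q w p) 1 := by
  simpa only [modPowRootCount_eq_modRootCount] using hasDirichletMean_modRootCount
    (monic_X_pow_sub_C _ hq.ne_zero) (irreducible_X_pow_sub_natCast hq hw)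

theorem modPowRootCount_one_eq {p q : ℕ} (hp : p.Prime) (hq : q.Prime) (hpq : p ≠ q) :
    modPowRootCount q 1 p = 1 + modRootCount (cyclotomic q ℤ) p := by
  have : Fact p.Prime := ⟨hp⟩
  have : Fact q.Prime := ⟨hq⟩
  have hcyc (t : ZMod p) : aeval t (cyclotomic q ℤ) = ∑ i ∈ Finset.range q, t ^ i := by
    simp [cyclotomic_prime]
  have hset : {t : ZMod p | t ^ q = (1 : ℕ)} =
      insert 1 {t : ZMod p | aeval t (cyclotomic q ℤ) = 0} := by
    ext t
    rw [Set.mem_ofPred_eq, Set.mem_insert_iff, Set.mem_ofPred_eq, hcyc, Nat.cast_one, ← sub_eq_zero,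
      ← geom_sum_mul, mul_eq_zero, sub_eq_zero, or_comm]
  have hone : (1 : ZMod p) ∉ {t : ZMod p | aeval t (cyclotomic q ℤ) = 0} := by
    simp only [Set.mem_ofPred_eq, hcyc, one_pow, Finset.sum_const, Finset.card_range, nsmul_one]
    rwa [ZMod.natCast_eq_zero_iff, Nat.prime_dvd_prime_iff_eq hp hq]
  calc modPowRootCount q 1 p = {t : ZMod p | t ^ q = (1 : ℕ)}.ncard := rfl
    _ = 1 + modRootCount (cyclotomic q ℤ) p := by
      rw [hset, Set.ncard_insert_of_notMem hone, add_comm]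
      rfl

theorem hasDirichletMean_modPowRootCount_one {q : ℕ} (hq : q.Prime) :
    HasDirichletMean (fun p ↦ modPowRootCount q 1 p) 2 := by
  have hconst : HasDirichletMean (fun _ ↦ 1) 1 := by
    simpa [modRootCount] using hasDirichletMean_modRootCount monic_X irreducible_X
  have hcyc := hasDirichletMean_modRootCount (cyclotomic.monic q ℤ) (cyclotomic.irreducible hq.pos)
  rw [← one_add_one_eq_two]
  refine (hconst.add hcyc).congr ?_
  filter_upwards [eventually_primes_not_dvd hq.ne_zero] with p hp
  rw [modPowRootCount_one_eq p.2 hq fun h ↦ hp h.dvd, Nat.cast_add, Nat.cast_one]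

theorem modPowRootCount_eq_card_preimage {p q w : ℕ} [Fact p.Prime] (hq : q ≠ 0) {u : (ZMod p)ˣ}
    (hu : (u : ZMod p) = w) :
    modPowRootCount q w p = Nat.card (powMonoidHom q ⁻¹' {u}) := by
  have hpow (t : (ZMod p)ˣ) : t ∈ powMonoidHom q ⁻¹' {u} ↔ (t : ZMod p) ^ q = w := by
    rw [← hu, ← Units.val_pow_eq_pow_val, Units.val_inj]
    rfl
  refine (Nat.card_congr (Equiv.ofBijective (Subtype.map Units.val fun t ↦ (hpow t).mp)
    ⟨Subtype.map_injective _ Units.val_injective, ?_⟩)).symm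
  rintro ⟨t, ht⟩
  obtain ⟨t, rfl⟩ : IsUnit t := (isUnit_pow_iff hq).mp (ht.trans hu.symm ▸ u.isUnit)
  exact ⟨⟨t, (hpow t).mpr ht⟩, rfl⟩

theorem sum_modPowRootCount_mul_pow {p q x y : ℕ} (hp : p.Prime) (hq : q.Prime) (hx : ¬ p ∣ x)
    (hy : ¬ p ∣ y) (h : orderOf (x : ZMod p) = orderOf (y : ZMod p)) :
    ∑ c ∈ Finset.range q, modPowRootCount q (x * y ^ c) p =
      (q - 1) * modPowRootCount q x p + modPowRootCount q 1 p := by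
  have : Fact p.Prime := ⟨hp⟩
  obtain ⟨u, hu⟩ : IsUnit (x : ZMod p) := by
    rwa [isUnit_iff_ne_zero, ne_eq, ZMod.natCast_eq_zero_iff]
  obtain ⟨v, hv⟩ : IsUnit (y : ZMod p) := by
    rwa [isUnit_iff_ne_zero, ne_eq, ZMod.natCast_eq_zero_iff]
  rw [← hu, ← hv, orderOf_units, orderOf_units] at h
  have huv (c : ℕ) : ((u * v ^ c : (ZMod p)ˣ) : ZMod p) = (x * y ^ c : ℕ) := by
    rw [Units.val_mul, Units.val_pow_eq_pow_val, hu, hv, Nat.cast_mul, Nat.cast_pow]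
  have h1 : ((1 : (ZMod p)ˣ) : ZMod p) = (1 : ℕ) := by rw [Units.val_one, Nat.cast_one]
  simp only [modPowRootCount_eq_card_preimage hq.ne_zero (huv _),
    modPowRootCount_eq_card_preimage hq.ne_zero hu, modPowRootCount_eq_card_preimage hq.ne_zero h1]
  exact sum_card_preimage_pow_mul_pow hq h

/-- Otherwise the two sides of `sum_modPowRootCount_mul_pow` would have Dirichlet means `q` and
`(q - 1) + 2`. -/
theorem exists_pow_eq_mul_pow {x y : ℕ} (hx : x ≠ 0) (hy : y ≠ 0)
    (h : ∀ᶠ p : ℕ in atTop, p.Prime → orderOf (x : ZMod p) = orderOf (y : ZMod p)) {q : ℕ}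
    (hq : q.Prime) : ∃ c z : ℕ, z ^ q = x * y ^ c := by
  by_contra! hne
  have hsum := HasDirichletMean.sum (S := Finset.range q)
    fun c _ ↦ hasDirichletMean_modPowRootCount hq (hne c)
  have hmean_x : HasDirichletMean (fun p ↦ modPowRootCount q x p) 1 :=
    hasDirichletMean_modPowRootCount hq fun z ↦ by simpa using hne 0 z
  have hmean := ((hmean_x.const_mul ((q - 1 : ℕ) : ℝ)).add
    (hasDirichletMean_modPowRootCount_one hq)).congr (g' := fun p ↦
      ∑ c ∈ Finset.range q, (modPowRootCount q (x * y ^ c) p : ℝ)) <| by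
    filter_upwards [tendsto_primes_coe_cofinite_atTop.eventually h, eventually_primes_not_dvd hx,
      eventually_primes_not_dvd hy] with p hp hpx hpy
    exact_mod_cast (sum_modPowRootCount_mul_pow p.2 hq hpx hpy (hp p.2)).symm
  have heq := hmean.unique hsum
  simp only [Finset.sum_const, Finset.card_range, nsmul_eq_mul, mul_one] at heq
  have : q - 1 + 2 = q := by exact_mod_cast heq
  have := hq.pos
  omega

end PowerRoots

section MultiplicativeDependence

theorem factorization_mul_factorization_eq {x y : ℕ} (hx : x ≠ 0) (hy : y ≠ 0)
    (h : ∀ q : ℕ, q.Prime → ∃ c z : ℕ, z ^ q = x * y ^ c) (l m : ℕ) :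
    x.factorization l * y.factorization m = x.factorization m * y.factorization l := by
  zify
  rw [← sub_eq_zero]
  set D : ℤ := x.factorization l * y.factorization m - x.factorization m * y.factorization l
    with hD
  obtain ⟨q, hq, hq_prime⟩ := Nat.exists_infinite_primes (D.natAbs + 1)
  refine Int.eq_zero_of_abs_lt_dvd (m := q) ?_ (by rw [Int.abs_eq_natAbs]; lia)
  obtain ⟨c, z, hz⟩ := h q hq_prime
  have hdvd (k : ℕ) : (q : ℤ) ∣ x.factorization k + c * y.factorization k := by
    have hk := congrArg (fun n ↦ n.factorization k) hz
    simp only [Nat.factorization_mul hx (pow_ne_zero c hy), Nat.factorization_pow,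
      Finsupp.add_apply, Finsupp.smul_apply, smul_eq_mul] at hk
    exact ⟨z.factorization k, by exact_mod_cast hk.symm⟩
  have hD_eq : D = (x.factorization l + c * y.factorization l) * y.factorization m -
      (x.factorization m + c * y.factorization m) * y.factorization l := by
    rw [hD]
    ring
  rw [hD_eq]
  exact dvd_sub ((hdvd l).mul_right _) ((hdvd m).mul_right _)

theorem exists_pow_eq_pow {x y : ℕ} (hx : 1 < x) (hy : y ≠ 0)
    (h : ∀ q : ℕ, q.Prime → ∃ c z : ℕ, z ^ q = x * y ^ c) : ∃ a b : ℕ, a ≠ 0 ∧ x ^ b = y ^ a := by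
  have hx0 : x ≠ 0 := Nat.ne_zero_of_lt hx
  obtain ⟨m, hm, hmx⟩ := Nat.exists_prime_and_dvd hx.ne'
  refine ⟨x.factorization m, y.factorization m, (hm.factorization_pos_of_dvd hx0 hmx).ne',
    Nat.eq_of_factorization_eq (pow_ne_zero _ hx0) (pow_ne_zero _ hy) fun l ↦ ?_⟩
  simp only [Nat.factorization_pow, Finsupp.smul_apply, smul_eq_mul]
  rw [mul_comm]
  exact factorization_mul_factorization_eq hx0 hy h l m

end MultiplicativeDependence

section OrderMod

theorem natCast_pow_totient_sq_eq_zero_or_one {r : ℕ} (hr : r.Prime) (x : ℕ) :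
    (x : ZMod (r ^ 2)) ^ (r ^ 2).totient = 0 ∨ (x : ZMod (r ^ 2)) ^ (r ^ 2).totient = 1 := by
  by_cases hrx : r ∣ x
  · left
    have h2 : 2 ≤ (r ^ 2).totient := by
      rw [Nat.totient_prime_pow_succ hr, pow_one]
      exact hr.two_le.trans (Nat.le_mul_of_pos_right r (Nat.sub_pos_of_lt hr.one_lt))
    rw [← Nat.cast_pow, ZMod.natCast_eq_zero_iff]
    exact (pow_dvd_pow_of_dvd hrx 2).trans (pow_dvd_pow x h2)
  · right
    have hcop : x.Coprime (r ^ 2) := ((hr.coprime_iff_not_dvd.mpr hrx).symm).pow_right 2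
    exact_mod_cast (ZMod.natCast_eq_natCast_iff _ _ _).mpr (Nat.ModEq.pow_totient hcop)

theorem not_sq_dvd_geom_sum {r t : ℕ} (hr : r.Prime)
    (ht : (t : ZMod (r ^ 2)) = 0 ∨ (t : ZMod (r ^ 2)) = 1) :
    ¬ r ^ 2 ∣ ∑ i ∈ Finset.range r, t ^ i := by
  rw [← ZMod.natCast_eq_zero_iff, Nat.cast_sum]
  simp only [Nat.cast_pow]
  rcases ht with ht | ht
  · have : Fact (1 < r ^ 2) := ⟨Nat.one_lt_pow two_ne_zero hr.one_lt⟩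
    rw [ht, zero_geom_sum, if_neg hr.ne_zero]
    exact one_ne_zero
  · simp only [ht, one_pow, Finset.sum_const, Finset.card_range, nsmul_one]
    rw [ZMod.natCast_eq_zero_iff]
    exact Nat.not_dvd_of_pos_of_lt hr.pos (lt_self_pow₀ hr.one_lt one_lt_two)

theorem lt_geom_sum {r t : ℕ} (hr : 1 < r) (ht : 1 < t) : r < ∑ i ∈ Finset.range r, t ^ i := by
  calc r = ∑ i ∈ Finset.range r, 1 := by rw [Finset.sum_const, Finset.card_range, smul_eq_mul,
        mul_one]
    _ < ∑ i ∈ Finset.range r, t ^ i := Finset.sum_lt_sum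
        (fun i _ ↦ Nat.one_le_pow _ _ (zero_lt_one.trans ht))
        ⟨1, Finset.mem_range.mpr hr, by rwa [pow_one]⟩

theorem exists_prime_ne_and_dvd {r N : ℕ} (hr : r.Prime) (hN : r < N) (h : ¬ r ^ 2 ∣ N) :
    ∃ p : ℕ, p.Prime ∧ p ≠ r ∧ p ∣ N := by
  by_contra! hne
  have hN_pow : N = r ^ N.primeFactorsList.length :=
    Nat.eq_prime_pow_of_unique_prime_dvd (Nat.ne_zero_of_lt hN) fun {d} hd hdN ↦
      by_contra fun hdr ↦ hne d hd hdr hdN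
  have hlength : 1 < N.primeFactorsList.length :=
    (Nat.pow_lt_pow_iff_right hr.one_lt).mp (by rwa [pow_one, ← hN_pow])
  exact h (hN_pow ▸ pow_dvd_pow r hlength)

theorem orderOf_eq_prime_pow_of_geom_sum_eq_zero {R : Type*} [CommRing R] {r m : ℕ} {u : R}
    (hr : r.Prime) (hr0 : (r : R) ≠ 0) (h : ∑ i ∈ Finset.range r, (u ^ r ^ m) ^ i = 0) :
    orderOf u = r ^ (m + 1) := by
  have : Fact r.Prime := ⟨hr⟩
  refine orderOf_eq_prime_pow (fun h1 ↦ hr0 ?_) ?_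
  · simpa only [h1, one_pow, Finset.sum_const, Finset.card_range, nsmul_one] using h
  · rw [pow_succ, pow_mul, ← sub_eq_zero, ← geom_sum_mul, h, zero_mul]

theorem exists_prime_orderOf_pow_totient_sq {x r : ℕ} (hx : 1 < x) (hr : r.Prime) (m : ℕ) :
    ∃ p : ℕ, p.Prime ∧ orderOf ((x : ZMod p) ^ (r ^ 2).totient) = r ^ (m + 1) := by
  set u := x ^ (r ^ 2).totient with hu
  have hrm : r ^ m ≠ 0 := pow_ne_zero m hr.ne_zero
  have hu_mod : ((u ^ r ^ m : ℕ) : ZMod (r ^ 2)) = 0 ∨ ((u ^ r ^ m : ℕ) : ZMod (r ^ 2)) = 1 := by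
    rw [Nat.cast_pow, hu, Nat.cast_pow]
    refine (natCast_pow_totient_sq_eq_zero_or_one hr x).imp (fun h ↦ ?_) fun h ↦ ?_
    · rw [h, zero_pow hrm]
    · rw [h, one_pow]
  have hu_one : 1 < u ^ r ^ m := by
    refine Nat.one_lt_pow hrm (Nat.one_lt_pow (Nat.totient_pos.mpr (pow_pos hr.pos 2)).ne' hx)
  obtain ⟨p, hp, hpr, hdvd⟩ := exists_prime_ne_and_dvd hr (lt_geom_sum hr.one_lt hu_one)
    (not_sq_dvd_geom_sum hr hu_mod)
  refine ⟨p, hp, orderOf_eq_prime_pow_of_geom_sum_eq_zero hr ?_ ?_⟩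
  · rwa [ne_eq, ZMod.natCast_eq_zero_iff, Nat.prime_dvd_prime_iff_eq hp hr]
  · rw [← ZMod.natCast_eq_zero_iff] at hdvd
    exact_mod_cast hdvd

theorem frequently_prime_pow_dvd_orderOf {x r : ℕ} (hx : 1 < x) (hr : r.Prime) (k : ℕ) :
    ∃ᶠ p : ℕ in atTop,
      p.Prime ∧ IsOfFinOrder (x : ZMod p) ∧ r ^ k ∣ orderOf (x : ZMod p) := by
  refine frequently_atTop.mpr fun n ↦ ?_
  obtain ⟨p, hp, hord⟩ := exists_prime_orderOf_pow_totient_sq hx hr (n + k)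
  have : Fact p.Prime := ⟨hp⟩
  have hpos : 0 < orderOf ((x : ZMod p) ^ (r ^ 2).totient) := hord ▸ pow_pos hr.pos _
  have hdvd : r ^ (n + k + 1) ∣ orderOf (x : ZMod p) := hord ▸ orderOf_pow_dvd _
  have hfin : IsOfFinOrder (x : ZMod p) := (orderOf_pos_iff.mp hpos).of_pow
    (Nat.totient_pos.mpr (pow_pos hr.pos 2)).ne'
  have hx0 : (x : ZMod p) ≠ 0 := hfin.isUnit.ne_zero
  have hle : r ^ (n + k + 1) ≤ p - 1 := Nat.le_of_dvd (Nat.sub_pos_of_lt hp.one_lt)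
    (hdvd.trans (ZMod.orderOf_dvd_card_sub_one hx0))
  have hlt : n + k + 1 < r ^ (n + k + 1) := Nat.lt_pow_self hr.one_lt
  exact ⟨p, by lia, hp, hfin, (pow_dvd_pow r (by lia)).trans hdvd⟩

end OrderMod

section Support

variable {x y : ℕ}

theorem dvd_of_pow_eq_pow (hx : 1 < x)
    (h : ∀ᶠ p : ℕ in atTop, p.Prime → orderOf (x : ZMod p) = orderOf (y : ZMod p)) {a b : ℕ}
    (hxy : x ^ b = y ^ a) : b ∣ a := by
  refine (Nat.dvd_iff_prime_pow_dvd_dvd a b).mpr fun r k hr hrb ↦ ?_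
  obtain ⟨p, ⟨hp, hx_fin, hrk⟩, hord⟩ := ((frequently_prime_pow_dvd_orderOf hx hr k).and_eventually
    h).exists
  replace hord := hord hp
  set d := orderOf (x : ZMod p)
  have hd : d ≠ 0 := hx_fin.orderOf_pos.ne'
  have hy_fin : IsOfFinOrder (y : ZMod p) := orderOf_pos_iff.mp (hord ▸ hx_fin.orderOf_pos)
  have hdiv : d / d.gcd b = d / d.gcd a := by
    rw [← hx_fin.orderOf_pow, hord, ← hy_fin.orderOf_pow]
    exact_mod_cast congrArg (fun n : ℕ ↦ orderOf (n : ZMod p)) hxy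
  have hgcd : d.gcd b = d.gcd a := by
    rw [← Nat.div_div_self (Nat.gcd_dvd_left d b) hd, hdiv,
      Nat.div_div_self (Nat.gcd_dvd_left d a) hd]
  exact (hgcd ▸ Nat.dvd_gcd hrk hrb).trans (Nat.gcd_dvd_right d a)

theorem eq_of_eventually_orderOf_eq (hx : 1 < x) (hy : y ≠ 0)
    (h : ∀ᶠ p : ℕ in atTop, p.Prime → orderOf (x : ZMod p) = orderOf (y : ZMod p)) : x = y := by
  obtain ⟨a, b, ha, hxy⟩ := exists_pow_eq_pow hx hy fun q hq ↦
    exists_pow_eq_mul_pow (Nat.ne_zero_of_lt hx) hy h hq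
  have hba : b ∣ a := dvd_of_pow_eq_pow hx h hxy
  have hb : b ≠ 0 := ne_zero_of_dvd_ne_zero ha hba
  have hy1 : 1 < y := (one_lt_pow_iff ha).mp (hxy ▸ Nat.one_lt_pow hb hx)
  have hab : a ∣ b := dvd_of_pow_eq_pow hy1 (h.mono fun p hp hp_prime ↦ (hp hp_prime).symm) hxy.symm
  exact Nat.pow_left_injective ha (Nat.dvd_antisymm hba hab ▸ hxy)

theorem orderOf_natCast_eq_of_dvd_iff {p : ℕ} (hx : 0 < x) (hy : 0 < y)
    (h : ∀ n : ℕ, 0 < n → (p ∣ x ^ n - 1 ↔ p ∣ y ^ n - 1)) :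
    orderOf (x : ZMod p) = orderOf (y : ZMod p) := by
  have hdvd_iff {w : ℕ} (hw : 0 < w) (n : ℕ) : p ∣ w ^ n - 1 ↔ (w : ZMod p) ^ n = 1 := by
    rw [← ZMod.natCast_eq_zero_iff, Nat.cast_sub (Nat.one_le_pow _ _ hw), sub_eq_zero,
      Nat.cast_pow, Nat.cast_one]
  refine orderOf_eq_orderOf_iff.mpr fun n ↦ ?_
  rcases n.eq_zero_or_pos with rfl | hn
  · simp only [pow_zero]
  · rw [← hdvd_iff hx, ← hdvd_iff hy, h n hn]

theorem support_problem_integers_general (hx : 0 < x) (hy : 0 < y)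
    (h : ∀ᶠ p : ℕ in atTop, p.Prime → ∀ n : ℕ, 0 < n → (p ∣ x ^ n - 1 ↔ p ∣ y ^ n - 1)) :
    x = y := by
  have hord : ∀ᶠ p : ℕ in atTop, p.Prime → orderOf (x : ZMod p) = orderOf (y : ZMod p) :=
    h.mono fun p hp hp_prime ↦ orderOf_natCast_eq_of_dvd_iff hx hy (hp hp_prime)
  rcases (Nat.one_le_iff_ne_zero.mpr hx.ne').eq_or_lt with rfl | hx1
  · rcases (Nat.one_le_iff_ne_zero.mpr hy.ne').eq_or_lt with rfl | hy1
    · rfl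
    · exact (eq_of_eventually_orderOf_eq hy1 one_ne_zero
        (hord.mono fun p hp hp_prime ↦ (hp hp_prime).symm)).symm
  · exact eq_of_eventually_orderOf_eq hx1 hy.ne' hord

end Support

/-- The support problem for integers (Corrales-Rodrigáñez–Schoof, answering Erdős):
if `x` and `y` are positive integers such that for every `n ≥ 1` and every prime `p`,
`p ∣ x^n - 1` if and only if `p ∣ y^n - 1`, then `x = y`. -/
theorem support_problem_integers (x y : ℕ) (hx : 0 < x) (hy : 0 < y)
    (h : ∀ n : ℕ, 0 < n → ∀ p : ℕ, p.Prime → (p ∣ x ^ n - 1 ↔ p ∣ y ^ n - 1)) :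
    x = y :=
  support_problem_integers_general hx hy (.of_forall fun p hp n hn ↦ h n hn p hp)
end
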